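/- arXiv:2205.11351 — 3 statements merged into one kernel-verified Lean document; each statement's English description precedes it below -/
import Mathlib

section
/- For every integer m ≥ 2 and every λ ∈ (0, π/2), there exist constants C > 0 and r > 0 such that for all y ∈ ℂ with 0 < |y| ≤ r and |arg(y)| ≤ λ, | Σ_{n=1}^∞ log(n)/(e^{ny} − 1) − [ log²(y)/(2y) + (π²/12 − γ²/2)/y − (1/4)log(2π) + (y/12)(log(A) − 1/12) + Σ_{k=2}^{m−1} (B_{2k} y^{2k−1}/k) { (B_{2k}/(2·(2k)!)) (γ − Σ_{j=1}^{2k−1} 1/j + log(2π)) + (−1)^k ζ'(2k)/(2π)^{2k} } ] | ≤ C |y|^{2m−1}. -/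
open Filter Topology MeasureTheory

noncomputable def eulerGamma : ℝ := Real.eulerMascheroniConstant

noncomputable def gamma1 : ℝ :=
  limUnder atTop (fun n : ℕ => ∑ j ∈ Finset.Icc 1 n, Real.log j / j - (Real.log n) ^ 2 / 2)

noncomputable def logGlaisher : ℝ :=
  limUnder atTop (fun n : ℕ =>
    ∑ k ∈ Finset.Icc 1 n, (k : ℝ) * Real.log k
      - ((n : ℝ) ^ 2 / 2 + (n : ℝ) / 2 + 1 / 12) * Real.log n + (n : ℝ) ^ 2 / 4)

/-!
Since `1 / (exp (n * y) - 1) = ∑ k ≥ 1, exp (-(n * k * y))`, the Cahen–Mellin integral turns the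
Lambert series `∑ log n / (exp (n * y) - 1)` into `(2 * π * I)⁻¹` times the integral of
`Γ s * (-ζ' s) * ζ s * y ^ (-s)` along the line `re s = 2`. On vertical strips `Γ` decays like
`exp (-θ * |im s|)` for every `θ < π / 2`, whereas `ζ` and `ζ'` grow subexponentially and
`‖y ^ (-s)‖ ≤ ‖y‖ ^ (-re s) * exp (|arg y| * |im s|)`. So for `|arg y| ≤ lam < π / 2` the line of
integration may be moved to `re s = -N - 1 / 2`, where the integral is `O(‖y‖ ^ (N + 1 / 2))`
uniformly in `arg y`. The triple pole at `1` contributes the terms in `log y ^ 2 / y` and `1 / y`,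
and the poles of `Γ` at `-j` contribute `(-1) ^ j / j! * (-ζ' (-j)) * ζ (-j) * y ^ j`. The latter
vanish for even `j > 0`; for odd `j` the functional equation expresses them through Bernoulli
numbers and `ζ' (j + 1)`, and for `j = 1` the value `ζ' (-1) = 1 / 12 - log A` is read off from
Euler–Maclaurin summation.
-/

section GammaIntegral

open Set

variable {a r : ℂ}

theorem norm_cpow_mul_exp_neg_mul (a r : ℂ) {t : ℝ} (ht : 0 < t) :
    ‖(t : ℂ) ^ (a - 1) * Complex.exp (-(r * t))‖ = t ^ (a.re - 1) * Real.exp (-r.re * t) := by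
  rw [norm_mul, Complex.norm_cpow_eq_rpow_re_of_pos ht, Complex.norm_exp]
  simp

theorem integrableOn_rpow_mul_exp_neg_mul_Ioi {σ c : ℝ} (hσ : 0 < σ) (hc : 0 < c) :
    IntegrableOn (fun t : ℝ => t ^ (σ - 1) * Real.exp (-c * t)) (Ioi 0) := by
  simpa using integrableOn_rpow_mul_exp_neg_mul_rpow (p := 1) (by linarith) one_pos hc

theorem aestronglyMeasurable_cpow_mul_exp_neg_mul (a r : ℂ) :
    AEStronglyMeasurable (fun t : ℝ => (t : ℂ) ^ (a - 1) * Complex.exp (-(r * t)))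
      (volume.restrict (Ioi 0)) := by
  refine ContinuousOn.aestronglyMeasurable (fun t ht => ?_) measurableSet_Ioi
  have hpow := Complex.continuousAt_ofReal_cpow_const t (a - 1) (Or.inr (ne_of_gt ht))
  exact (hpow.mul (by fun_prop)).continuousWithinAt

theorem integrableOn_cpow_mul_exp_neg_mul_Ioi (ha : 0 < a.re) (hr : 0 < r.re) :
    IntegrableOn (fun t : ℝ => (t : ℂ) ^ (a - 1) * Complex.exp (-(r * t))) (Ioi 0) := by
  refine (integrableOn_rpow_mul_exp_neg_mul_Ioi ha hr).mono'
    (aestronglyMeasurable_cpow_mul_exp_neg_mul a r) ?_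
  filter_upwards [ae_restrict_mem measurableSet_Ioi] with t ht
  rw [norm_cpow_mul_exp_neg_mul a r ht]

theorem differentiableAt_integral_cpow_mul_exp_neg_mul (ha : 0 < a.re) (hr : 0 < r.re) :
    DifferentiableAt ℂ
      (fun z : ℂ => ∫ t in Ioi (0 : ℝ), (t : ℂ) ^ (a - 1) * Complex.exp (-(z * t))) r := by
  have hbound : ∀ t ∈ Ioi (0 : ℝ), ∀ z ∈ Metric.ball r (r.re / 2),
      ‖(t : ℂ) ^ (a - 1) * (Complex.exp (-(z * t)) * -t)‖
        ≤ t ^ (a.re + 1 - 1) * Real.exp (-(r.re / 2) * t) := by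
    intro t ht z hz
    have ht0 : 0 < t := ht
    have hre : r.re / 2 ≤ z.re := by
      have hlt := (Complex.abs_re_le_norm (z - r)).trans_lt (mem_ball_iff_norm.mp hz)
      rw [Complex.sub_re] at hlt
      linarith [(abs_lt.mp hlt).1]
    rw [← mul_assoc, norm_mul, norm_cpow_mul_exp_neg_mul a z ht, norm_neg,
      Complex.norm_of_nonneg ht0.le, show a.re + 1 - 1 = a.re - 1 + 1 by ring,
      Real.rpow_add ht0, Real.rpow_one, mul_right_comm]
    gcongr
  refine (hasDerivAt_integral_of_dominated_loc_of_deriv_le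
    (F' := fun z (t : ℝ) => (t : ℂ) ^ (a - 1) * (Complex.exp (-(z * t)) * -t))
    (Metric.ball_mem_nhds r (half_pos hr))
    (.of_forall fun z => aestronglyMeasurable_cpow_mul_exp_neg_mul a z)
    (integrableOn_cpow_mul_exp_neg_mul_Ioi ha hr) ?_
    ((ae_restrict_iff' measurableSet_Ioi).mpr (.of_forall hbound))
    (integrableOn_rpow_mul_exp_neg_mul_Ioi (by linarith) (half_pos hr))
    (.of_forall fun t z _ => ?_)).2.differentiableAt
  · simpa only [Pi.mul_def, Pi.neg_def, mul_assoc] using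
      (aestronglyMeasurable_cpow_mul_exp_neg_mul a r).mul
        Complex.continuous_ofReal.neg.aestronglyMeasurable
  · simpa using ((((hasDerivAt_id z).mul_const (t : ℂ)).fun_neg).cexp).const_mul ((t : ℂ) ^ (a - 1))

-- Mathlib has this for real `r` only; both sides are analytic in `r`.
theorem integral_cpow_mul_exp_neg_mul_Ioi_complex (ha : 0 < a.re) (hr : 0 < r.re) :
    ∫ t in Ioi (0 : ℝ), (t : ℂ) ^ (a - 1) * Complex.exp (-(r * t)) =
      r ^ (-a) * Complex.Gamma a := by
  have hopen : IsOpen {z : ℂ | 0 < z.re} := isOpen_lt continuous_const Complex.continuous_re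
  have hleft : DifferentiableOn ℂ
      (fun z : ℂ => ∫ t in Ioi (0 : ℝ), (t : ℂ) ^ (a - 1) * Complex.exp (-(z * t)))
      {z | 0 < z.re} := fun z hz =>
    (differentiableAt_integral_cpow_mul_exp_neg_mul ha hz).differentiableWithinAt
  have hright : DifferentiableOn ℂ (fun z : ℂ => z ^ (-a) * Complex.Gamma a) {z | 0 < z.re} :=
    fun z hz => ((differentiableAt_id.cpow_const (Or.inl hz)).mul_const _).differentiableWithinAt
  have hreal : ∀ x : ℝ, 1 < x →
      ∫ t in Ioi (0 : ℝ), (t : ℂ) ^ (a - 1) * Complex.exp (-(x * t)) =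
        (x : ℂ) ^ (-a) * Complex.Gamma a := by
    intro x hx
    have hx0 : 0 < x := one_pos.trans hx
    rw [Complex.integral_cpow_mul_exp_neg_mul_Ioi ha hx0, one_div,
      Complex.inv_cpow _ _ (by simp [Complex.arg_ofReal_of_nonneg hx0.le, Real.pi_ne_zero.symm]),
      Complex.cpow_neg]
  have htendsto : Tendsto ((↑) : ℝ → ℂ) (𝓝[>] 1) (𝓝[≠] 1) :=
    tendsto_nhdsWithin_of_tendsto_nhds_of_eventually_within _
      ((Complex.continuous_ofReal.tendsto' 1 1 (by simp)).mono_left nhdsWithin_le_nhds)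
      (eventually_nhdsWithin_of_forall fun x hx => by simpa using ne_of_gt hx)
  exact (hleft.analyticOnNhd hopen).eqOn_of_preconnected_of_frequently_eq
    (hright.analyticOnNhd hopen) (convex_halfSpace_re_gt 0).isPreconnected
    (z₀ := 1) (by simp)
    (htendsto.frequently (Eventually.frequently (f := 𝓝[>] (1 : ℝ))
      (eventually_nhdsWithin_of_forall hreal))) hr

theorem norm_Gamma_mul_exp_le {φ : ℝ} (hφ : |φ| < Real.pi / 2) {σ₁ σ₂ : ℝ} (hσ₁ : 0 < σ₁) {s : ℂ}
    (hs₁ : σ₁ ≤ s.re) (hs₂ : s.re ≤ σ₂) :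
    ‖Complex.Gamma s‖ * Real.exp (φ * s.im) ≤ ∫ t in Ioi (0 : ℝ),
      (t ^ (σ₁ - 1) * Real.exp (-Real.cos φ * t) + t ^ (σ₂ - 1) * Real.exp (-Real.cos φ * t)) := by
  obtain ⟨hφ₁, hφ₂⟩ := abs_lt.mp hφ
  have hcos : 0 < Real.cos φ := Real.cos_pos_of_mem_Ioo ⟨by linarith, hφ₂⟩
  have hre : (Complex.exp (φ * Complex.I)).re = Real.cos φ := Complex.exp_ofReal_mul_I_re φ
  have hs : 0 < s.re := hσ₁.trans_le hs₁
  -- Rotating the ray of integration by `φ` trades decay in `t` for the factor `exp (φ * s.im)`.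
  have hrot : ‖Complex.Gamma s‖ * Real.exp (φ * s.im) =
      ‖Complex.exp (φ * Complex.I) ^ (-s) * Complex.Gamma s‖ := by
    have hlog : Complex.log (Complex.exp (φ * Complex.I)) = φ * Complex.I := by
      apply Complex.log_exp <;> simp <;> linarith [Real.pi_pos]
    rw [norm_mul, mul_comm, Complex.cpow_def_of_ne_zero (Complex.exp_ne_zero _), hlog,
      Complex.norm_exp]
    simp
  rw [hrot, ← integral_cpow_mul_exp_neg_mul_Ioi_complex hs (by rwa [hre])]
  refine (norm_integral_le_integral_norm _).trans (setIntegral_mono_on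
    (integrableOn_cpow_mul_exp_neg_mul_Ioi hs (by rwa [hre])).norm
    ((integrableOn_rpow_mul_exp_neg_mul_Ioi hσ₁ hcos).add
      (integrableOn_rpow_mul_exp_neg_mul_Ioi (hs.trans_le hs₂) hcos))
    measurableSet_Ioi fun t ht => ?_)
  have ht0 : 0 < t := ht
  rw [norm_cpow_mul_exp_neg_mul _ _ ht, hre, ← add_mul]
  gcongr
  rcases le_total t 1 with h1 | h1
  · linarith [Real.rpow_le_rpow_of_exponent_ge ht0 h1 (show σ₁ - 1 ≤ s.re - 1 by linarith),
      Real.rpow_pos_of_pos ht0 (σ₂ - 1)]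
  · linarith [Real.rpow_le_rpow_of_exponent_le h1 (show s.re - 1 ≤ σ₂ - 1 by linarith),
      Real.rpow_pos_of_pos ht0 (σ₁ - 1)]

end GammaIntegral

section VerticalStrips

open Set Asymptotics

/-- The filter describing points that tend to infinity, upwards or downwards, inside the closed
vertical strip `a ≤ re s ≤ b`. -/
def stripEnds (a b : ℝ) : Filter ℂ :=
  comap (fun s : ℂ => |s.im|) atTop ⊓ 𝓟 {s | s.re ∈ Icc a b}

variable {a b c ε θ : ℝ} {f : ℂ → ℂ}

theorem tendsto_abs_im_stripEnds (a b : ℝ) :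
    Tendsto (fun s : ℂ => |s.im|) (stripEnds a b) atTop :=
  tendsto_comap.mono_left inf_le_left

theorem eventually_re_mem_stripEnds (a b : ℝ) : ∀ᶠ s in stripEnds a b, s.re ∈ Icc a b :=
  mem_inf_of_right (mem_principal_self _)

theorem tendsto_stripEnds_iff {ι : Type*} {l : Filter ι} {g : ι → ℂ} :
    Tendsto g l (stripEnds a b) ↔
      Tendsto (fun i => |(g i).im|) l atTop ∧ ∀ᶠ i in l, (g i).re ∈ Icc a b := by
  rw [stripEnds, tendsto_inf, tendsto_comap_iff, tendsto_principal]
  rfl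

theorem eventually_stripEnds_iff {P : ℂ → Prop} :
    (∀ᶠ s in stripEnds a b, P s) ↔ ∃ T, ∀ s : ℂ, s.re ∈ Icc a b → T ≤ |s.im| → P s := by
  rw [stripEnds, eventually_inf_principal, eventually_comap, eventually_atTop]
  constructor
  · rintro ⟨T, h⟩
    exact ⟨T, fun s hs hT => h _ hT s rfl hs⟩
  · rintro ⟨T, h⟩
    exact ⟨T, fun x hx s hsx hs => h s hs (hsx ▸ hx)⟩

theorem tendsto_id_stripEnds {a' b' : ℝ} (ha : a' ≤ a) (hb : b ≤ b') :
    Tendsto id (stripEnds a b) (stripEnds a' b') :=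
  tendsto_stripEnds_iff.mpr ⟨tendsto_abs_im_stripEnds a b,
    (eventually_re_mem_stripEnds a b).mono fun _ hs => Icc_subset_Icc ha hb hs⟩

theorem tendsto_add_one_stripEnds (a b : ℝ) :
    Tendsto (fun s : ℂ => s + 1) (stripEnds a b) (stripEnds (a + 1) (b + 1)) :=
  tendsto_stripEnds_iff.mpr ⟨by simpa using tendsto_abs_im_stripEnds a b,
    (eventually_re_mem_stripEnds a b).mono fun s hs => by simpa using hs⟩

theorem tendsto_one_sub_stripEnds (a b : ℝ) :
    Tendsto (fun s : ℂ => 1 - s) (stripEnds a b) (stripEnds (1 - b) (1 - a)) :=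
  tendsto_stripEnds_iff.mpr ⟨by simpa using tendsto_abs_im_stripEnds a b,
    (eventually_re_mem_stripEnds a b).mono fun s hs => by
      simpa only [Complex.sub_re, Complex.one_re, mem_Icc, sub_le_sub_iff_left] using hs.symm⟩

theorem stripEnds_le_sup (a b c : ℝ) : stripEnds a b ≤ stripEnds a c ⊔ stripEnds c b := by
  rw [stripEnds, stripEnds, stripEnds, ← inf_sup_left, sup_principal]
  refine inf_le_inf_left _ (principal_mono.mpr fun s hs => ?_)
  rcases le_total s.re c with h | h
  exacts [Or.inl ⟨hs.1, h⟩, Or.inr ⟨h, hs.2⟩]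

theorem eventually_ne_stripEnds (a b : ℝ) (z : ℂ) : ∀ᶠ s in stripEnds a b, s ≠ z :=
  ((tendsto_abs_im_stripEnds a b).eventually_gt_atTop |z.im|).mono
    fun _ hs h => hs.ne' (by rw [h])

theorem isBigO_exp_abs_im_of_le {θ₁ θ₂ : ℝ} (h : θ₁ ≤ θ₂) (l : Filter ℂ) :
    (fun s : ℂ => Real.exp (θ₁ * |s.im|)) =O[l] fun s => Real.exp (θ₂ * |s.im|) :=
  .of_norm_le fun s => by
    rw [Real.norm_of_nonneg (Real.exp_pos _).le]
    gcongr

theorem isBigO_id_abs_im (a b : ℝ) : (fun s : ℂ => s) =O[stripEnds a b] fun s => |s.im| := by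
  refine .of_bound (max |a| |b| + 1) ?_
  filter_upwards [eventually_re_mem_stripEnds a b,
    (tendsto_abs_im_stripEnds a b).eventually_ge_atTop 1] with s hs him
  have hre : |s.re| ≤ max |a| |b| := abs_le_max_abs_abs hs.1 hs.2
  rw [Real.norm_of_nonneg (abs_nonneg _)]
  nlinarith [Complex.norm_le_abs_re_add_abs_im s, (abs_nonneg a).trans (le_max_left _ |b|)]

theorem isBigO_const_abs_im (a b : ℝ) (w : ℂ) :
    (fun _ : ℂ => w) =O[stripEnds a b] fun s => |s.im| :=
  (isLittleO_const_left.mpr <| .inr <|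
    tendsto_norm_atTop_atTop.comp (tendsto_abs_im_stripEnds a b)).isBigO

theorem isBigO_abs_im_pow_exp (hε : 0 < ε) (a b : ℝ) (n : ℕ) :
    (fun s : ℂ => |s.im| ^ n) =O[stripEnds a b] fun s => Real.exp (ε * |s.im|) :=
  ((isLittleO_pow_exp_pos_mul_atTop n hε).comp_tendsto (tendsto_abs_im_stripEnds a b)).isBigO

-- Cauchy's estimate on unit discs.
theorem isBigO_deriv_stripEnds
    (hf : f =O[stripEnds (a - 1) (b + 1)] fun s => Real.exp (θ * |s.im|))
    (hd : ∀ᶠ s in stripEnds (a - 1) (b + 1), DifferentiableAt ℂ f s) :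
    deriv f =O[stripEnds a b] fun s => Real.exp (θ * |s.im|) := by
  obtain ⟨C, hC, hbound⟩ := hf.exists_nonneg
  obtain ⟨T, hT⟩ := eventually_stripEnds_iff.mp (hd.and hbound.bound)
  refine .of_bound (C * Real.exp |θ|)
    (eventually_stripEnds_iff.mpr ⟨T + 1, fun s hs hsT => ?_⟩)
  have hball : ∀ z ∈ Metric.closedBall s 1,
      DifferentiableAt ℂ f z ∧ ‖f z‖ ≤ C * Real.exp |θ| * Real.exp (θ * |s.im|) := by
    intro z hz
    have hz1 : ‖z - s‖ ≤ 1 := mem_closedBall_iff_norm.mp hz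
    have hre := abs_le.mp ((Complex.abs_re_le_norm (z - s)).trans hz1)
    have him : |(|z.im| - |s.im|)| ≤ 1 :=
      (abs_abs_sub_abs_le z.im s.im).trans ((Complex.abs_im_le_norm (z - s)).trans hz1)
    rw [Complex.sub_re] at hre
    obtain ⟨hdz, hfz⟩ := hT z ⟨by linarith [hs.1, hre.1], by linarith [hs.2, hre.2]⟩
      (by linarith [(abs_le.mp him).1])
    refine ⟨hdz, hfz.trans ?_⟩
    rw [Real.norm_of_nonneg (Real.exp_pos _).le, mul_assoc, ← Real.exp_add]
    gcongr
    have hθ : θ * (|z.im| - |s.im|) ≤ |θ| * 1 := (le_abs_self _).trans (by rw [abs_mul]; gcongr)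
    linarith
  have hcl : DiffContOnCl ℂ f (Metric.ball s 1) := by
    refine DifferentiableOn.diffContOnCl fun z hz => ?_
    rw [closure_ball s one_ne_zero] at hz
    exact (hball z hz).1.differentiableWithinAt
  rw [Real.norm_of_nonneg (Real.exp_pos _).le]
  simpa using Complex.norm_deriv_le_of_forall_mem_sphere_norm_le one_pos hcl
    fun z hz => (hball z (Metric.sphere_subset_closedBall hz)).2

theorem isBigO_Gamma_stripEnds_of_pos (hθ₀ : 0 ≤ θ) (hθ : θ < Real.pi / 2) (ha : 0 < a) :
    Complex.Gamma =O[stripEnds a b] fun s => Real.exp (-θ * |s.im|) := by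
  refine .of_bound (∫ t in Ioi (0 : ℝ), (t ^ (a - 1) * Real.exp (-Real.cos θ * t) +
    t ^ (b - 1) * Real.exp (-Real.cos θ * t))) ?_
  filter_upwards [eventually_re_mem_stripEnds a b] with s hs
  rw [Real.norm_of_nonneg (Real.exp_pos _).le, neg_mul, Real.exp_neg, ← div_eq_mul_inv,
    le_div_iff₀ (Real.exp_pos _)]
  rcases abs_cases s.im with ⟨h, -⟩ | ⟨h, -⟩
  · rw [h]
    exact norm_Gamma_mul_exp_le (by rwa [abs_of_nonneg hθ₀]) ha hs.1 hs.2
  · rw [h, mul_neg, ← neg_mul, ← Real.cos_neg θ]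
    exact norm_Gamma_mul_exp_le (by rwa [abs_neg, abs_of_nonneg hθ₀]) ha hs.1 hs.2

theorem isBigO_Gamma_stripEnds (hθ : θ < Real.pi / 2) (a b : ℝ) :
    Complex.Gamma =O[stripEnds a b] fun s => Real.exp (-θ * |s.im|) := by
  suffices h : ∀ (N : ℕ) (a b : ℝ), -(N : ℝ) < a →
      Complex.Gamma =O[stripEnds a b] fun s => Real.exp (-max θ 0 * |s.im|) by
    obtain ⟨N, hN⟩ := exists_nat_gt (-a)
    exact (h N a b (by linarith)).trans
      (isBigO_exp_abs_im_of_le (neg_le_neg (le_max_left θ 0)) _)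
  intro N
  induction N with
  | zero =>
    intro a b ha
    exact isBigO_Gamma_stripEnds_of_pos (le_max_right _ _)
      (max_lt hθ (by positivity)) (by simpa using ha)
  | succ N ih =>
    intro a b ha
    have hshift : (fun s => Complex.Gamma (s + 1)) =O[stripEnds a b]
        fun s => Real.exp (-max θ 0 * |s.im|) := by
      have ha' : -(N : ℝ) < a + 1 := by push_cast at ha; linarith
      simpa [Function.comp_def] using
        (ih (a + 1) (b + 1) ha').comp_tendsto (tendsto_add_one_stripEnds a b)
    refine .trans (.of_norm_eventuallyLE ?_) hshift.norm_left
    filter_upwards [(tendsto_abs_im_stripEnds a b).eventually_ge_atTop 1,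
      eventually_ne_stripEnds a b 0] with s him hs
    rw [Complex.Gamma_add_one s hs, norm_mul]
    exact le_mul_of_one_le_left (norm_nonneg _) (him.trans (Complex.abs_im_le_norm s))

theorem norm_cpow_neg_le_of_abs_arg_le {y : ℂ} {lam : ℝ} (hy : y ≠ 0) (harg : |y.arg| ≤ lam)
    (s : ℂ) : ‖y ^ (-s)‖ ≤ ‖y‖ ^ (-s.re) * Real.exp (lam * |s.im|) := by
  have hexp : y.arg * s.im ≤ lam * |s.im| :=
    calc y.arg * s.im ≤ |y.arg| * |s.im| := by rw [← abs_mul]; exact le_abs_self _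
      _ ≤ lam * |s.im| := by gcongr
  rw [Complex.norm_cpow_of_ne_zero hy, div_eq_mul_inv, ← Real.exp_neg, Complex.neg_re,
    Complex.neg_im, mul_neg, neg_neg]
  exact mul_le_mul_of_nonneg_left (Real.exp_le_exp.mpr hexp) (by positivity)

theorem integrable_exp_neg_mul_abs (hc : 0 < c) :
    Integrable fun t : ℝ => Real.exp (-c * |t|) := by
  have hcont : Continuous fun t : ℝ => Real.exp (-c * |t|) := by fun_prop
  refine hcont.locallyIntegrable.integrable_of_isBigO_atTop_of_norm_isNegInvariant
    (g := fun t => Real.exp (-c * t)) (.of_forall fun t => by simp) (EventuallyEq.isBigO ?_)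
    ⟨Ioi 0, Ioi_mem_atTop 0, exp_neg_integrableOn_Ioi 0 hc⟩
  filter_upwards [eventually_ge_atTop 0] with t ht
  rw [abs_of_nonneg ht]

theorem tendsto_line_cocompact_stripEnds (c : ℝ) :
    Tendsto (fun t : ℝ => (c + t * Complex.I : ℂ)) (cocompact ℝ) (stripEnds c c) :=
  tendsto_stripEnds_iff.mpr ⟨tendsto_norm_cocompact_atTop.congr fun t => by simp, by simp⟩

theorem integrable_exp_mul_norm_line {lam : ℝ}
    (hcont : Continuous fun t : ℝ => f (c + t * Complex.I))
    (hf : f =O[stripEnds c c] fun s => Real.exp (-θ * |s.im|)) (hlam : lam < θ) :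
    Integrable fun t : ℝ => Real.exp (lam * |t|) * ‖f (c + t * Complex.I)‖ := by
  have hline : (fun t : ℝ => f (c + t * Complex.I)) =O[cocompact ℝ]
      fun t => Real.exp (-θ * |t|) := by
    simpa [Function.comp_def] using hf.comp_tendsto (tendsto_line_cocompact_stripEnds c)
  have hexp : Continuous fun t : ℝ => Real.exp (lam * |t|) := by fun_prop
  refine (hexp.mul hcont.norm).locallyIntegrable.integrable_of_isBigO_cocompact
    (g := fun t => Real.exp (-(θ - lam) * |t|)) ?_
    ((integrable_exp_neg_mul_abs (sub_pos.mpr hlam)).integrableAtFilter _)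
  refine ((isBigO_refl (fun t : ℝ => Real.exp (lam * |t|)) _).mul hline.norm_left).congr_right
    fun t => ?_
  rw [← Real.exp_add]
  ring_nf

theorem norm_line_mul_cpow_le {lam : ℝ} {y : ℂ} (hy : y ≠ 0) (harg : |y.arg| ≤ lam) (t : ℝ) :
    ‖f (c + t * Complex.I) * y ^ (-(c + t * Complex.I))‖
      ≤ Real.exp (lam * |t|) * ‖f (c + t * Complex.I)‖ * ‖y‖ ^ (-c) := by
  have hcpow := norm_cpow_neg_le_of_abs_arg_le hy harg (c + t * Complex.I)
  simp only [Complex.add_re, Complex.ofReal_re, Complex.mul_re, Complex.I_re, mul_zero,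
    Complex.ofReal_im, Complex.I_im, mul_one, sub_self, add_zero, Complex.add_im,
    Complex.mul_im, zero_add] at hcpow
  calc _ ≤ ‖f (c + t * Complex.I)‖ * (‖y‖ ^ (-c) * Real.exp (lam * |t|)) := by
        rw [norm_mul]; gcongr
    _ = _ := by ring

theorem integrable_line_mul_cpow {lam : ℝ} {y : ℂ}
    (hcont : Continuous fun t : ℝ => f (c + t * Complex.I))
    (hf : f =O[stripEnds c c] fun s => Real.exp (-θ * |s.im|)) (hlam : lam < θ)
    (hy : y ≠ 0) (harg : |y.arg| ≤ lam) :
    Integrable fun t : ℝ => f (c + t * Complex.I) * y ^ (-(c + t * Complex.I)) := by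
  have hpow : Continuous fun t : ℝ => y ^ (-(c + t * Complex.I)) :=
    Continuous.const_cpow (by fun_prop) (Or.inl hy)
  exact ((integrable_exp_mul_norm_line hcont hf hlam).mul_const _).mono'
    (hcont.mul hpow).aestronglyMeasurable
    (.of_forall fun t => norm_line_mul_cpow_le hy harg t)

theorem isBigO_integral_line_mul_cpow {lam : ℝ}
    (hcont : Continuous fun t : ℝ => f (c + t * Complex.I))
    (hf : f =O[stripEnds c c] fun s => Real.exp (-θ * |s.im|)) (hlam : lam < θ) :
    (fun y : ℂ => ∫ t : ℝ, f (c + t * Complex.I) * y ^ (-(c + t * Complex.I)))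
      =O[𝓟 {y : ℂ | y ≠ 0 ∧ |y.arg| ≤ lam}] fun y => ‖y‖ ^ (-c) := by
  refine isBigO_principal.mpr
    ⟨∫ t : ℝ, Real.exp (lam * |t|) * ‖f (c + t * Complex.I)‖, fun y ⟨hy, harg⟩ => ?_⟩
  rw [Real.norm_of_nonneg (by positivity), ← integral_mul_const]
  exact norm_integral_le_of_norm_le
    ((integrable_exp_mul_norm_line hcont hf hlam).mul_const _)
    (.of_forall fun t => norm_line_mul_cpow_le hy harg t)

end VerticalStrips

section EulerMaclaurin

open Set

/-- `(s - 1)` times the Euler–Maclaurin approximation, up to the `B₂` term, of the tail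
`∑_{k > x} k ^ (-s)` of the zeta series. -/
noncomputable def zetaTailApprox (x : ℝ) (s : ℂ) : ℂ :=
  (x : ℂ) ^ (1 - s) - (s - 1) / 2 * (x : ℂ) ^ (-s) + (s - 1) * s / 12 * (x : ℂ) ^ (-s - 1)

/-- The error made by `zetaTailApprox` between `x` and `x + 1`. -/
noncomputable def zetaTailDefect (x : ℝ) (s : ℂ) : ℂ :=
  (s - 1) * ((x + 1 : ℝ) : ℂ) ^ (-s) + zetaTailApprox (x + 1) s - zetaTailApprox x s

theorem hasDerivAt_ofReal_add_cpow {x t : ℝ} (h : 0 < x + t) (w : ℂ) :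
    HasDerivAt (fun u : ℝ => ((x + u : ℝ) : ℂ) ^ w) (w * ((x + t : ℝ) : ℂ) ^ (w - 1)) t := by
  have hpow := ((hasDerivAt_id ((x + t : ℝ) : ℂ)).cpow_const (c := w)
    (Complex.ofReal_mem_slitPlane.mpr h)).comp_ofReal
  rw [mul_one] at hpow
  exact hpow.comp_const_add x t

-- Repeated integration by parts against the Bernoulli polynomials `B₁`, `B₂ / 2`, `B₃ / 6`.
theorem hasDerivAt_zetaTailDefect_primitive (s : ℂ) {x t : ℝ} (h : 0 < x + t) :
    HasDerivAt (fun t : ℝ =>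
      (s - 1) * (((t : ℂ) ^ 3 - 3 / 2 * (t : ℂ) ^ 2 + (t : ℂ) / 2) / 6
            * (s * (s + 1) * ((x + t : ℝ) : ℂ) ^ (-s - 2))
          - (3 * (t : ℂ) ^ 2 - 3 * (t : ℂ) + 1 / 2) / 6 * (-s * ((x + t : ℝ) : ℂ) ^ (-s - 1))
          + ((t : ℂ) - 1 / 2) * ((x + t : ℝ) : ℂ) ^ (-s))
        + ((x + t : ℝ) : ℂ) ^ (1 - s))
      ((s - 1) * (((t ^ 3 - 3 / 2 * t ^ 2 + t / 2) / 6 : ℝ) : ℂ)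
        * (-(s * (s + 1) * (s + 2)) * ((x + t : ℝ) : ℂ) ^ (-s - 3))) t := by
  have hid : HasDerivAt (fun u : ℝ => (u : ℂ)) 1 t := Complex.ofRealCLM.hasDerivAt
  have hB₃ : HasDerivAt (fun u : ℝ => ((u : ℂ) ^ 3 - 3 / 2 * (u : ℂ) ^ 2 + (u : ℂ) / 2) / 6)
      ((3 * (t : ℂ) ^ 2 - 3 * (t : ℂ) + 1 / 2) / 6) t := by
    refine ((((hid.fun_pow 3).fun_sub ((hid.fun_pow 2).const_mul (3 / 2))).fun_add
      (hid.div_const 2)).div_const 6).congr_deriv ?_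
    norm_num
    ring
  have hB₂ : HasDerivAt (fun u : ℝ => (3 * (u : ℂ) ^ 2 - 3 * (u : ℂ) + 1 / 2) / 6)
      ((t : ℂ) - 1 / 2) t := by
    refine ((((hid.fun_pow 2).const_mul 3).fun_sub (hid.const_mul 3)).add_const (1 / 2)
      |>.div_const 6).congr_deriv ?_
    norm_num
    ring
  have hB₁ : HasDerivAt (fun u : ℝ => (u : ℂ) - 1 / 2) 1 t := hid.sub_const _
  have hpow : ∀ w v : ℂ, w - 1 = v →
      HasDerivAt (fun u : ℝ => ((x + u : ℝ) : ℂ) ^ w) (w * ((x + t : ℝ) : ℂ) ^ v) t :=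
    fun w v hwv => hwv ▸ hasDerivAt_ofReal_add_cpow h w
  have h₀ := hpow (1 - s) (-s) (by ring)
  have h₁ := hpow (-s) (-s - 1) (by ring)
  have h₂ := hpow (-s - 1) (-s - 2) (by ring)
  have h₃ := hpow (-s - 2) (-s - 3) (by ring)
  refine (((((hB₃.fun_mul (h₃.const_mul (s * (s + 1)))).fun_sub
    (hB₂.fun_mul (h₂.const_mul (-s)))).fun_add (hB₁.fun_mul h₁)).const_mul (s - 1)).fun_add
    h₀).congr_deriv ?_
  push_cast
  ring

theorem zetaTailDefect_eq_integral {x : ℝ} (hx : 0 < x) (s : ℂ) :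
    zetaTailDefect x s = ∫ t in (0 : ℝ)..1,
      (s - 1) * (((t ^ 3 - 3 / 2 * t ^ 2 + t / 2) / 6 : ℝ) : ℂ)
        * (-(s * (s + 1) * (s + 2)) * ((x + t : ℝ) : ℂ) ^ (-s - 3)) := by
  have hpos : ∀ t ∈ uIcc (0 : ℝ) 1, 0 < x + t := by
    intro t ht
    rw [uIcc_of_le zero_le_one] at ht
    linarith [ht.1]
  rw [intervalIntegral.integral_eq_sub_of_hasDerivAt
    fun t ht => hasDerivAt_zetaTailDefect_primitive s (hpos t ht)]
  · rw [zetaTailDefect, zetaTailApprox, zetaTailApprox, add_zero]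
    push_cast
    ring
  · refine ContinuousOn.intervalIntegrable fun t ht => ContinuousAt.continuousWithinAt ?_
    have hpow := (hasDerivAt_ofReal_add_cpow (hpos t ht) (-s - 3)).continuousAt
    exact ContinuousAt.mul (by fun_prop) (continuousAt_const.mul hpow)

theorem norm_zetaTailDefect_le {x σ : ℝ} (hx1 : 1 ≤ x) (hσ : -3 ≤ σ) {s : ℂ} (hs : σ ≤ s.re) :
    ‖zetaTailDefect x s‖ ≤ ‖(s - 1) * (s * (s + 1) * (s + 2))‖ * x ^ (-σ - 3) := by
  have hx : 0 < x := one_pos.trans_le hx1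
  rw [zetaTailDefect_eq_integral hx]
  refine (intervalIntegral.norm_integral_le_of_norm_le_const fun t ht => ?_).trans_eq
    (by rw [sub_zero, abs_one, mul_one])
  rw [uIoc_of_le zero_le_one] at ht
  obtain ⟨ht₀, ht₁⟩ := ht
  have hpoly : |(t ^ 3 - 3 / 2 * t ^ 2 + t / 2) / 6| ≤ 1 := by
    have h₂ : t ^ 2 ≤ 1 := pow_le_one₀ ht₀.le ht₁
    have h₃ : t ^ 3 ≤ 1 := pow_le_one₀ ht₀.le ht₁
    rw [abs_le]
    constructor <;> linarith [pow_pos ht₀ 2, pow_pos ht₀ 3]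
  have hpow : ‖((x + t : ℝ) : ℂ) ^ (-s - 3)‖ ≤ x ^ (-σ - 3) := by
    rw [Complex.norm_cpow_eq_rpow_re_of_pos (by linarith)]
    simp only [Complex.sub_re, Complex.neg_re, Complex.re_ofNat]
    calc (x + t) ^ (-s.re - 3) ≤ (x + t) ^ (-σ - 3) :=
          Real.rpow_le_rpow_of_exponent_le (by linarith) (by linarith)
      _ ≤ x ^ (-σ - 3) := Real.rpow_le_rpow_of_nonpos hx (by linarith) (by linarith)
  calc _ = ‖s - 1‖ * |(t ^ 3 - 3 / 2 * t ^ 2 + t / 2) / 6|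
        * (‖s * (s + 1) * (s + 2)‖ * ‖((x + t : ℝ) : ℂ) ^ (-s - 3)‖) := by
        rw [norm_mul, norm_mul, norm_mul, norm_neg, Complex.norm_real, Real.norm_eq_abs]
    _ ≤ ‖s - 1‖ * 1 * (‖s * (s + 1) * (s + 2)‖ * x ^ (-σ - 3)) := by gcongr
    _ = _ := by rw [mul_one, norm_mul (s - 1) (s * (s + 1) * (s + 2)), ← mul_assoc]

theorem differentiable_zetaTailApprox {x : ℝ} (hx : 0 < x) :
    Differentiable ℂ (zetaTailApprox x) := by
  have hx0 : (x : ℂ) ≠ 0 := Complex.ofReal_ne_zero.mpr hx.ne'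
  unfold zetaTailApprox
  fun_prop (disch := exact Or.inl hx0)

theorem differentiable_zetaTailDefect {x : ℝ} (hx : 0 < x) :
    Differentiable ℂ (zetaTailDefect x) := by
  have hx1 : 0 < x + 1 := by linarith
  have hpow : Differentiable ℂ fun s : ℂ => ((x + 1 : ℝ) : ℂ) ^ (-s) := fun s =>
    differentiableAt_id.neg.const_cpow (Or.inl (Complex.ofReal_ne_zero.mpr hx1.ne'))
  have h₁ := differentiable_zetaTailApprox hx1
  have h₂ := differentiable_zetaTailApprox hx
  unfold zetaTailDefect
  fun_prop

/-- The `N`-th Euler–Maclaurin approximation of `(s - 1) * ζ s`, with `N + 1` terms of the zeta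
series. -/
noncomputable def zetaApprox (N : ℕ) (s : ℂ) : ℂ :=
  (s - 1) * ∑ n ∈ Finset.range (N + 1), ((n + 1 : ℝ) : ℂ) ^ (-s) + zetaTailApprox (N + 1) s

theorem zetaApprox_eq_add_sum (N : ℕ) (s : ℂ) :
    zetaApprox N s = zetaApprox 0 s + ∑ n ∈ Finset.range N, zetaTailDefect (n + 1) s := by
  induction N with
  | zero => simp
  | succ N ih =>
    rw [Finset.sum_range_succ, ← add_assoc, ← ih, zetaApprox, zetaApprox,
      Finset.sum_range_succ _ (N + 1), zetaTailDefect]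
    push_cast
    ring

theorem differentiable_zetaApprox_zero : Differentiable ℂ (zetaApprox 0) := by
  have h := differentiable_zetaTailApprox one_pos
  unfold zetaApprox
  simpa using (differentiable_id.sub_const (1 : ℂ)).fun_add h

theorem summable_natCast_add_one_rpow {σ : ℝ} (hσ : -2 < σ) :
    Summable fun n : ℕ => ((n : ℝ) + 1) ^ (-σ - 3) := by
  simpa using (summable_nat_add_iff 1).mpr
    (Real.summable_nat_rpow.mpr (show -σ - 3 < -1 by linarith))

theorem tendsto_natCast_add_one_cpow {w : ℂ} (hw : w.re < 0) :
    Tendsto (fun N : ℕ => (((N : ℝ) + 1 : ℝ) : ℂ) ^ w) atTop (𝓝 0) := by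
  have hrpow : Tendsto (fun N : ℕ => ((N : ℝ) + 1) ^ (-(-w.re))) atTop (𝓝 0) :=
    (tendsto_rpow_neg_atTop (neg_pos.mpr hw)).comp
      (tendsto_atTop_add_const_right _ _ tendsto_natCast_atTop_atTop)
  refine tendsto_zero_iff_norm_tendsto_zero.mpr (hrpow.congr fun N => ?_)
  rw [Complex.norm_cpow_eq_rpow_re_of_pos (by positivity), neg_neg]

theorem hasSum_natCast_add_one_cpow {s : ℂ} (hs : 1 < s.re) :
    HasSum (fun n : ℕ => ((n + 1 : ℝ) : ℂ) ^ (-s)) (riemannZeta s) := by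
  have hsum : Summable fun n : ℕ => 1 / ((n : ℂ) + 1) ^ s := by
    simpa using (summable_nat_add_iff 1).mpr (Complex.summable_one_div_nat_cpow.mpr hs)
  rw [zeta_eq_tsum_one_div_nat_add_one_cpow hs]
  simpa [Complex.cpow_neg] using hsum.hasSum

theorem tendsto_zetaApprox_of_one_lt_re {s : ℂ} (hs : 1 < s.re) :
    Tendsto (fun N => zetaApprox N s) atTop (𝓝 (riemannZeta₁ s)) := by
  have hs1 : s ≠ 1 := by rintro rfl; simp at hs
  have hpartial := ((hasSum_natCast_add_one_cpow hs).tendsto_sum_nat.comp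
    (tendsto_add_atTop_nat 1)).const_mul (s - 1)
  have h₁ := tendsto_natCast_add_one_cpow (w := 1 - s) (by simpa using hs)
  have h₂ := (tendsto_natCast_add_one_cpow (w := -s) (by simp; linarith)).const_mul ((s - 1) / 2)
  have h₃ := (tendsto_natCast_add_one_cpow (w := -s - 1) (by simp; linarith)).const_mul
    ((s - 1) * s / 12)
  have htail := (h₁.sub h₂).add h₃
  rw [riemannZeta_eq_inv_sub_mul hs1, mul_inv_cancel_left₀ (sub_ne_zero.mpr hs1)] at hpartial
  simpa [zetaApprox, zetaTailApprox, Function.comp_def] using hpartial.add htail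

theorem exists_summable_bound_zetaTailDefect {s₀ : ℂ} (hs₀ : -2 < s₀.re) :
    ∃ δ > 0, ∃ u : ℕ → ℝ, Summable u ∧
      ∀ n : ℕ, ∀ s ∈ Metric.ball s₀ δ, ‖zetaTailDefect (n + 1) s‖ ≤ u n := by
  set σ := (s₀.re - 2) / 2 with hσ
  have hcont : Continuous fun s : ℂ => (s - 1) * (s * (s + 1) * (s + 2)) := by fun_prop
  obtain ⟨M, hM⟩ := (isCompact_closedBall s₀ (s₀.re - σ)).exists_bound_of_continuousOn
    hcont.continuousOn
  refine ⟨s₀.re - σ, by linarith, fun n => M * ((n : ℝ) + 1) ^ (-σ - 3),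
    (summable_natCast_add_one_rpow (by linarith)).mul_left M, fun n s hs => ?_⟩
  have hre : σ ≤ s.re := by
    have hlt := (Complex.abs_re_le_norm (s - s₀)).trans_lt (mem_ball_iff_norm.mp hs)
    rw [Complex.sub_re] at hlt
    linarith [(abs_lt.mp hlt).1]
  exact (norm_zetaTailDefect_le (by simp) (by linarith) hre).trans
    (mul_le_mul_of_nonneg_right (hM s (Metric.ball_subset_closedBall hs)) (by positivity))

theorem differentiableAt_tsum_zetaTailDefect {s : ℂ} (hs : -2 < s.re) :
    DifferentiableAt ℂ (fun s => ∑' n : ℕ, zetaTailDefect (n + 1) s) s := by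
  obtain ⟨δ, hδ, u, hu, hbound⟩ := exists_summable_bound_zetaTailDefect hs
  exact (Complex.differentiableOn_tsum_of_summable_norm hu
    (fun n => (differentiable_zetaTailDefect (by positivity)).differentiableOn)
    Metric.isOpen_ball hbound).differentiableAt (Metric.ball_mem_nhds _ hδ)

theorem riemannZeta₁_eq_zetaApprox_add_tsum {s : ℂ} (hs : -2 < s.re) :
    riemannZeta₁ s = zetaApprox 0 s + ∑' n : ℕ, zetaTailDefect (n + 1) s := by
  have hopen : ∀ x : ℝ, IsOpen {s : ℂ | x < s.re} := fun x =>
    isOpen_lt continuous_const Complex.continuous_re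
  have hdiff : DifferentiableOn ℂ
      (fun s => zetaApprox 0 s + ∑' n : ℕ, zetaTailDefect (n + 1) s) {s | -2 < s.re} := fun s hs =>
    ((differentiable_zetaApprox_zero s).add
      (differentiableAt_tsum_zetaTailDefect hs)).differentiableWithinAt
  refine (differentiable_riemannZeta₁.differentiableOn.analyticOnNhd
    (hopen (-2))).eqOn_of_preconnected_of_eventuallyEq (hdiff.analyticOnNhd (hopen (-2)))
    (convex_halfSpace_re_gt _).isPreconnected (z₀ := 2) (by simp) ?_ hs
  filter_upwards [(hopen 1).mem_nhds (show (2 : ℂ) ∈ {s : ℂ | 1 < s.re} by simp)] with s hs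
  have hre : -2 < s.re := by linarith [show 1 < s.re from hs]
  obtain ⟨δ, hδ, u, hu, hbound⟩ := exists_summable_bound_zetaTailDefect hre
  have hsum := (Summable.of_norm_bounded hu fun n =>
    hbound n s (Metric.mem_ball_self hδ)).hasSum.tendsto_sum_nat.const_add (zetaApprox 0 s)
  simp_rw [← zetaApprox_eq_add_sum] at hsum
  exact tendsto_nhds_unique (tendsto_zetaApprox_of_one_lt_re hs) hsum

theorem tendsto_deriv_zetaApprox {s : ℂ} (hs : -2 < s.re) :
    Tendsto (fun N => deriv (zetaApprox N) s) atTop (𝓝 (deriv riemannZeta₁ s)) := by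
  obtain ⟨δ, hδ, u, hu, hbound⟩ := exists_summable_bound_zetaTailDefect hs
  have hd : ∀ n : ℕ, Differentiable ℂ (zetaTailDefect (n + 1)) := fun n =>
    differentiable_zetaTailDefect (by positivity)
  have hsum := Complex.hasSum_deriv_of_summable_norm hu (fun n => (hd n).differentiableOn)
    Metric.isOpen_ball hbound (Metric.mem_ball_self hδ)
  have hderiv : deriv riemannZeta₁ s =
      deriv (zetaApprox 0) s + deriv (fun s => ∑' n : ℕ, zetaTailDefect (n + 1) s) s := by
    rw [← deriv_fun_add (differentiable_zetaApprox_zero s)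
      (differentiableAt_tsum_zetaTailDefect hs)]
    refine EventuallyEq.deriv_eq ?_
    filter_upwards [(isOpen_lt continuous_const Complex.continuous_re).mem_nhds hs] with z hz
    exact riemannZeta₁_eq_zetaApprox_add_tsum hz
  rw [hderiv]
  refine (hsum.tendsto_sum_nat.const_add _).congr fun N => ?_
  rw [← deriv_fun_sum fun n _ => hd n s, ← deriv_fun_add (differentiable_zetaApprox_zero s)
    (DifferentiableAt.fun_sum fun n _ => hd n s)]
  simp_rw [← zetaApprox_eq_add_sum]

theorem norm_riemannZeta₁_sub_zetaApprox_le {σ : ℝ} (hσ : -2 < σ) {s : ℂ} (hs : σ ≤ s.re) :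
    ‖riemannZeta₁ s - zetaApprox 0 s‖ ≤
      ‖(s - 1) * (s * (s + 1) * (s + 2))‖ * ∑' n : ℕ, ((n : ℝ) + 1) ^ (-σ - 3) := by
  rw [riemannZeta₁_eq_zetaApprox_add_tsum (hσ.trans_le hs), add_sub_cancel_left, ← tsum_mul_left]
  exact tsum_of_norm_bounded ((summable_natCast_add_one_rpow hσ).mul_left _).hasSum
    fun n => norm_zetaTailDefect_le (by simp) (by linarith) hs

theorem hasDerivAt_ofReal_cpow_comp {x : ℝ} (hx : 0 < x) {g : ℂ → ℂ} {g' s : ℂ}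
    (hg : HasDerivAt g g' s) :
    HasDerivAt (fun z => (x : ℂ) ^ g z) ((x : ℂ) ^ g s * (Real.log x : ℂ) * g') s := by
  rw [Complex.ofReal_log hx.le]
  exact hg.const_cpow (Or.inl (Complex.ofReal_ne_zero.mpr hx.ne'))

/-- The sequence whose limit defines `logGlaisher`. -/
noncomputable def glaisherSeq (n : ℕ) : ℝ :=
  ∑ k ∈ Finset.Icc 1 n, (k : ℝ) * Real.log k
    - ((n : ℝ) ^ 2 / 2 + (n : ℝ) / 2 + 1 / 12) * Real.log n + (n : ℝ) ^ 2 / 4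

theorem sum_Icc_one_eq_sum_range {M : Type*} [AddCommMonoid M] (f : ℕ → M) (n : ℕ) :
    ∑ k ∈ Finset.Icc 1 n, f k = ∑ k ∈ Finset.range n, f (k + 1) := by
  induction n with
  | zero => simp
  | succ n ih => rw [Finset.sum_Icc_succ_top (by omega), ih, Finset.sum_range_succ]

theorem sum_range_cast_add_one (N : ℕ) :
    ∑ n ∈ Finset.range (N + 1), ((n : ℂ) + 1) = (N + 1) * (N + 2) / 2 := by
  induction N with
  | zero => norm_num
  | succ N ih => rw [Finset.sum_range_succ, ih]; push_cast; ring

theorem deriv_zetaApprox_neg_one (N : ℕ) :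
    deriv (zetaApprox N) (-1) = ((2 * glaisherSeq (N + 1) - 1 / 4 : ℝ) : ℂ) := by
  have hid : HasDerivAt (fun s : ℂ => s) 1 (-1) := hasDerivAt_id _
  have hneg : HasDerivAt (fun s : ℂ => -s) (-1) (-1) := hid.fun_neg
  have hsub : HasDerivAt (fun s : ℂ => s - 1) 1 (-1) := hid.sub_const 1
  have hN : (0 : ℝ) < N + 1 := by positivity
  have hsum : HasDerivAt (fun s : ℂ => ∑ n ∈ Finset.range (N + 1), ((n + 1 : ℝ) : ℂ) ^ (-s))
      (∑ n ∈ Finset.range (N + 1),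
        ((n + 1 : ℝ) : ℂ) ^ (-(-1 : ℂ)) * (Real.log (n + 1) : ℂ) * -1) (-1) :=
    HasDerivAt.fun_sum fun n _ => hasDerivAt_ofReal_cpow_comp (by positivity) hneg
  have h₁ := hasDerivAt_ofReal_cpow_comp hN (hid.const_sub 1)
  have h₂ := hasDerivAt_ofReal_cpow_comp hN hneg
  have h₃ := hasDerivAt_ofReal_cpow_comp hN (hneg.sub_const 1)
  have htwo : (((N : ℝ) + 1 : ℝ) : ℂ) ^ (1 - (-1 : ℂ)) = ((N : ℂ) + 1) ^ 2 := by
    rw [show (1 - (-1 : ℂ)) = ((2 : ℕ) : ℂ) by norm_num, Complex.cpow_natCast]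
    push_cast
    rfl
  have hzero : -(-1 : ℂ) - 1 = 0 := by norm_num
  refine ((hsub.fun_mul hsum).fun_add ((h₁.fun_sub ((hsub.div_const 2).fun_mul h₂)).fun_add
    (((hsub.fun_mul hid).div_const 12).fun_mul h₃))).deriv.trans ?_
  rw [htwo, hzero, neg_neg, Complex.cpow_zero, glaisherSeq, sum_Icc_one_eq_sum_range]
  simp only [Complex.cpow_one, ← Finset.sum_mul]
  push_cast
  rw [sum_range_cast_add_one]
  ring

theorem deriv_riemannZeta_neg_one : deriv riemannZeta (-1) = 1 / 12 - (logGlaisher : ℂ) := by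
  set L := deriv riemannZeta₁ (-1)
  have hlim : Tendsto (fun N => ((2 * glaisherSeq (N + 1) - 1 / 4 : ℝ) : ℂ)) atTop (𝓝 L) := by
    simpa only [deriv_zetaApprox_neg_one] using
      tendsto_deriv_zetaApprox (s := -1) (by norm_num)
  have hre : Tendsto (fun N => 2 * glaisherSeq (N + 1) - 1 / 4) atTop (𝓝 L.re) :=
    (Complex.continuous_re.tendsto L).comp hlim
  have hreal : (L.re : ℂ) = L :=
    tendsto_nhds_unique ((Complex.continuous_ofReal.tendsto _).comp hre) hlim
  have hglaisher : logGlaisher = (L.re + 1 / 4) / 2 := by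
    refine Tendsto.limUnder_eq ((tendsto_add_atTop_iff_nat (f := glaisherSeq) 1).mp ?_)
    exact ((hre.add_const (1 / 4)).div_const 2).congr fun N => by ring
  have hzeta : riemannZeta₁ (-1) = 1 / 6 := by
    have hval := riemannZeta_neg_nat_eq_bernoulli 1
    rw [Nat.cast_one, riemannZeta_eq_inv_sub_mul (by norm_num)] at hval
    norm_num [bernoulli_eq_bernoulli'_of_ne_one] at hval
    linear_combination 2 * hval
  rw [deriv_riemannZeta_eq_neg_inv_sub_sq_mul_add (by norm_num), hzeta, hglaisher]
  push_cast
  rw [hreal]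
  norm_num
  ring

end EulerMaclaurin

section ZetaStrips

open Set Asymptotics

variable {ε θ : ℝ}

theorem zetaApprox_zero (s : ℂ) : zetaApprox 0 s = (s + 2) * (s + 3) / 12 := by
  simp only [zetaApprox, zetaTailApprox, zero_add, Finset.sum_range_one, Nat.cast_zero,
    Complex.ofReal_one, Complex.one_cpow]
  ring

theorem isBigO_riemannZeta_riemannZeta₁ (a b : ℝ) :
    riemannZeta =O[stripEnds a b] riemannZeta₁ := by
  refine .of_bound' ?_
  filter_upwards [(tendsto_abs_im_stripEnds a b).eventually_ge_atTop 1,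
    eventually_ne_stripEnds a b 1] with s him hs
  rw [riemannZeta_eq_inv_sub_mul hs, norm_mul, norm_inv]
  have hle : 1 ≤ ‖s - 1‖ := him.trans (by simpa using Complex.abs_im_le_norm (s - 1))
  exact mul_le_of_le_one_left (norm_nonneg _) (inv_le_one_of_one_le₀ hle)

theorem isBigO_riemannZeta_stripEnds_of_neg_one (hε : 0 < ε) (b : ℝ) :
    riemannZeta =O[stripEnds (-1) b] fun s => Real.exp (ε * |s.im|) := by
  have hlin (w : ℂ) : (fun s : ℂ => s + w) =O[stripEnds (-1) b] fun s => |s.im| :=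
    (isBigO_id_abs_im _ _).add (isBigO_const_abs_im _ _ w)
  have happrox : zetaApprox 0 =O[stripEnds (-1) b] fun s => |s.im| ^ 2 := by
    refine (((hlin 2).mul (hlin 3)).const_mul_left (1 / 12)).congr (fun s => ?_) fun s => ?_
    · rw [zetaApprox_zero]; ring
    · ring
  have hpoly : (fun s : ℂ => (s - 1) * (s * (s + 1) * (s + 2))) =O[stripEnds (-1) b]
      fun s => |s.im| ^ 4 := by
    refine ((hlin (-1)).mul (((isBigO_id_abs_im _ _).mul (hlin 1)).mul (hlin 2))).congr
      (fun s => ?_) fun s => ?_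
    · rw [← sub_eq_add_neg]
    · ring
  have herror : (fun s => riemannZeta₁ s - zetaApprox 0 s) =O[stripEnds (-1) b]
      fun s : ℂ => (s - 1) * (s * (s + 1) * (s + 2)) := by
    refine .of_bound (∑' n : ℕ, ((n : ℝ) + 1) ^ (-(-1 : ℝ) - 3))
      ((eventually_re_mem_stripEnds (-1) b).mono fun s hs => ?_)
    rw [mul_comm]
    exact norm_riemannZeta₁_sub_zetaApprox_le (by norm_num) hs.1
  refine (isBigO_riemannZeta_riemannZeta₁ (-1) b).trans ?_
  simpa only [sub_add_cancel] using
    ((herror.trans hpoly).trans (isBigO_abs_im_pow_exp hε (-1) b 4)).add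
      (happrox.trans (isBigO_abs_im_pow_exp hε (-1) b 2))

theorem norm_cos_le_exp_abs_im (z : ℂ) : ‖Complex.cos z‖ ≤ Real.exp |z.im| := by
  have hpos : ‖Complex.exp (z * Complex.I)‖ ≤ Real.exp |z.im| := by
    simp [Complex.norm_exp, neg_le_abs]
  have hneg : ‖Complex.exp (-z * Complex.I)‖ ≤ Real.exp |z.im| := by
    simp [Complex.norm_exp, le_abs_self]
  rw [Complex.cos, norm_div, Complex.norm_ofNat]
  linarith [norm_add_le (Complex.exp (z * Complex.I)) (Complex.exp (-z * Complex.I))]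

theorem isBigO_riemannZeta_one_sub (hε : 0 < ε) (b : ℝ) :
    (fun s => riemannZeta (1 - s)) =O[stripEnds 2 b] fun s => Real.exp (ε * |s.im|) := by
  have hpow : (fun s : ℂ => (2 * (Real.pi : ℂ)) ^ (-s)) =O[stripEnds 2 b] fun _ => (1 : ℝ) := by
    refine .of_norm_eventuallyLE ((eventually_re_mem_stripEnds 2 b).mono fun s hs => ?_)
    beta_reduce
    rw [show (2 * (Real.pi : ℂ)) = ((2 * Real.pi : ℝ) : ℂ) by push_cast; rfl,
      Complex.norm_cpow_eq_rpow_re_of_pos (by positivity), Complex.neg_re]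
    exact Real.rpow_le_one_of_one_le_of_nonpos (by linarith [Real.pi_gt_three])
      (by linarith [hs.1])
  have hcos : (fun s : ℂ => Complex.cos (Real.pi * s / 2)) =O[stripEnds 2 b]
      fun s => Real.exp (Real.pi / 2 * |s.im|) := by
    refine .of_norm_le fun s => (norm_cos_le_exp_abs_im _).trans_eq ?_
    rw [show (Real.pi * s / 2 : ℂ) = ((Real.pi / 2 : ℝ) : ℂ) * s by push_cast; ring,
      Complex.im_ofReal_mul, abs_mul, abs_of_pos (by positivity)]
  have hGamma := isBigO_Gamma_stripEnds (sub_lt_self (Real.pi / 2) (half_pos hε)) 2 b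
  have hzeta := (isBigO_riemannZeta_stripEnds_of_neg_one (half_pos hε) b).mono
    (tendsto_id_stripEnds (a := 2) (by norm_num) le_rfl)
  refine ((((hpow.const_mul_left 2).mul hGamma).mul hcos).mul hzeta).congr' ?_
    (.of_eq (funext fun s => ?_))
  · filter_upwards [(tendsto_abs_im_stripEnds 2 b).eventually_gt_atTop 0] with s him
    rw [riemannZeta_one_sub]
    · rintro n rfl
      simp at him
    · rintro rfl
      simp at him
  · rw [one_mul, ← Real.exp_add, ← Real.exp_add]
    ring_nf

theorem isBigO_riemannZeta_stripEnds (hε : 0 < ε) (a b : ℝ) :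
    riemannZeta =O[stripEnds a b] fun s => Real.exp (ε * |s.im|) := by
  have hleft : riemannZeta =O[stripEnds a (-1)] fun s => Real.exp (ε * |s.im|) := by
    have h := tendsto_one_sub_stripEnds a (-1)
    rw [show (1 : ℝ) - -1 = 2 by norm_num] at h
    simpa [Function.comp_def] using (isBigO_riemannZeta_one_sub hε (1 - a)).comp_tendsto h
  exact (hleft.sup (isBigO_riemannZeta_stripEnds_of_neg_one hε b)).mono (stripEnds_le_sup a b (-1))

theorem isBigO_deriv_riemannZeta_stripEnds (hε : 0 < ε) (a b : ℝ) :
    deriv riemannZeta =O[stripEnds a b] fun s => Real.exp (ε * |s.im|) :=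
  isBigO_deriv_stripEnds (isBigO_riemannZeta_stripEnds hε _ _)
    ((eventually_ne_stripEnds _ _ 1).mono fun _ => differentiableAt_riemannZeta)

/-- The Mellin transform `Γ(s) * (-ζ'(s)) * ζ(s)` of the Lambert series
`∑ log n / (exp (n * y) - 1)`. -/
noncomputable def lambertKernel (s : ℂ) : ℂ :=
  Complex.Gamma s * (-deriv riemannZeta s) * riemannZeta s

theorem isBigO_lambertKernel_stripEnds (hθ : θ < Real.pi / 2) (a b : ℝ) :
    lambertKernel =O[stripEnds a b] fun s => Real.exp (-θ * |s.im|) := by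
  obtain ⟨δ, hδ⟩ := exists_between hθ
  have hε : 0 < (δ - θ) / 2 := by linarith [hδ.1]
  refine (((isBigO_Gamma_stripEnds hδ.2 a b).mul
    (isBigO_deriv_riemannZeta_stripEnds hε a b).neg_left).mul
    (isBigO_riemannZeta_stripEnds hε a b)).congr_right fun s => ?_
  rw [← Real.exp_add, ← Real.exp_add]
  ring_nf

end ZetaStrips

section LambertCoefficients

theorem eventually_ne_neg_natCast {s : ℂ} (hs : ∀ n : ℕ, s ≠ -n) :
    ∀ᶠ w : ℂ in 𝓝 s, ∀ n : ℕ, w ≠ -n := by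
  filter_upwards [Complex.differentiable_one_div_Gamma.continuous.continuousAt.eventually_ne
    (inv_ne_zero (Complex.Gamma_ne_zero hs))] with w hw n hwn
  exact hw (by rw [hwn, Complex.Gamma_neg_nat_eq_zero, inv_zero])

theorem deriv_riemannZeta_one_sub {s : ℂ} (hs : ∀ n : ℕ, s ≠ -n) (hs1 : s ≠ 1) :
    deriv riemannZeta (1 - s) = 2 * (2 * (Real.pi : ℂ)) ^ (-s) *
      (Complex.Gamma s * (Complex.cos (Real.pi * s / 2) *
          (Complex.log (2 * (Real.pi : ℂ)) * riemannZeta s - deriv riemannZeta s)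
        + Real.pi / 2 * Complex.sin (Real.pi * s / 2) * riemannZeta s)
      - deriv Complex.Gamma s * Complex.cos (Real.pi * s / 2) * riemannZeta s) := by
  have hpi : (2 * (Real.pi : ℂ)) ≠ 0 := by simp
  have hs0 : s ≠ 0 := by simpa using hs 0
  have hid : HasDerivAt (fun w : ℂ => w) 1 s := hasDerivAt_id s
  have hpow := hid.fun_neg.const_cpow (Or.inl hpi)
  have hGamma := (Complex.differentiableAt_Gamma s hs).hasDerivAt
  have hcos := ((hid.const_mul (Real.pi : ℂ)).div_const 2).ccos
  have hzeta := (differentiableAt_riemannZeta hs1).hasDerivAt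
  have hleft : HasDerivAt (fun w : ℂ => riemannZeta (1 - w)) (deriv riemannZeta (1 - s) * -1) s :=
    HasDerivAt.comp s (differentiableAt_riemannZeta (by simpa using hs0)).hasDerivAt
      (hid.const_sub 1)
  have hright := (((hpow.const_mul 2).fun_mul hGamma).fun_mul hcos).fun_mul hzeta
  have hfunctional : (fun w : ℂ => riemannZeta (1 - w)) =ᶠ[𝓝 s] fun w =>
      2 * (2 * (Real.pi : ℂ)) ^ (-w) * Complex.Gamma w * Complex.cos (Real.pi * w / 2)
        * riemannZeta w := by
    filter_upwards [isOpen_ne.mem_nhds hs1, eventually_ne_neg_natCast hs] with w hw1 hw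
    exact riemannZeta_one_sub hw hw1
  linear_combination -hleft.unique (hright.congr_of_eventuallyEq hfunctional)

theorem deriv_riemannZeta_one_sub_two_mul {k : ℕ} (hk : k ≠ 0) :
    deriv riemannZeta (1 - 2 * (k : ℂ)) = riemannZeta (1 - 2 * (k : ℂ)) *
        (Complex.log (2 * (Real.pi : ℂ)) + Real.eulerMascheroniConstant - harmonic (2 * k - 1))
      - 2 * (-1) ^ k * ((2 * k - 1).factorial : ℂ) * deriv riemannZeta (2 * (k : ℂ))
        / (2 * (Real.pi : ℂ)) ^ (2 * k) := by
  have hcast : 2 * (k : ℂ) = ((2 * k - 1 : ℕ) : ℂ) + 1 := by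
    exact_mod_cast (by omega : 2 * k = 2 * k - 1 + 1)
  have hne (n : ℕ) : 2 * (k : ℂ) ≠ -n := by
    intro h
    have hsum : ((2 * k + n : ℕ) : ℂ) = 0 := by push_cast; linear_combination h
    have hsum' : 2 * k + n = 0 := by exact_mod_cast hsum
    omega
  have hne1 : 2 * (k : ℂ) ≠ 1 := by exact_mod_cast (by omega : 2 * k ≠ 1)
  have hangle : (Real.pi * (2 * (k : ℂ)) / 2 : ℂ) = k * Real.pi := by ring
  have hpow : (2 * (Real.pi : ℂ)) ^ (-(2 * (k : ℂ))) = ((2 * (Real.pi : ℂ)) ^ (2 * k))⁻¹ := by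
    rw [Complex.cpow_neg, ← Nat.cast_ofNat, ← Nat.cast_mul, Complex.cpow_natCast]
  have hGamma : Complex.Gamma (2 * (k : ℂ)) = ((2 * k - 1).factorial : ℂ) := by
    rw [hcast, Complex.Gamma_nat_eq_factorial]
  have hcos : Complex.cos (k * Real.pi) = (-1) ^ k := by
    exact_mod_cast congrArg Complex.ofReal (Real.cos_nat_mul_pi k)
  have hGamma' : deriv Complex.Gamma (2 * (k : ℂ)) = ((2 * k - 1).factorial : ℂ) *
      (-Real.eulerMascheroniConstant + harmonic (2 * k - 1)) := by
    rw [hcast, (Complex.hasDerivAt_Gamma_nat (2 * k - 1)).deriv]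
  rw [deriv_riemannZeta_one_sub hne hne1, riemannZeta_one_sub hne hne1, hangle,
    Complex.sin_nat_mul_pi, hcos, hpow, hGamma, hGamma']
  ring

theorem riemannZeta_one_sub_two_mul {k : ℕ} (hk : k ≠ 0) :
    riemannZeta (1 - 2 * (k : ℂ)) = -(bernoulli (2 * k) : ℂ) / (2 * k) := by
  have hsucc : 2 * k - 1 + 1 = 2 * k := by omega
  have hcast : ((2 * k - 1 : ℕ) : ℂ) = 2 * k - 1 := by
    rw [Nat.cast_sub (by omega)]; push_cast; rfl
  have hval := riemannZeta_neg_nat_eq_bernoulli (2 * k - 1)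
  rw [hsucc, hcast, neg_sub, Odd.neg_one_pow ⟨k - 1, by omega⟩, sub_add_cancel] at hval
  rw [hval, neg_one_mul]

/-- The coefficient of `y ^ j` in the asymptotic expansion, i.e. the residue at `-j` of
`lambertKernel`. -/
noncomputable def lambertCoeff (j : ℕ) : ℂ :=
  (-1) ^ j / (j.factorial : ℂ) * (-deriv riemannZeta (-j) * riemannZeta (-j))

theorem lambertCoeff_zero : lambertCoeff 0 = -(1 / 4) * Complex.log (2 * (Real.pi : ℂ)) := by
  simp only [lambertCoeff, pow_zero, Nat.factorial_zero, Nat.cast_one, Nat.cast_zero, neg_zero,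
    riemannZeta_zero, deriv_riemannZeta_zero]
  ring

theorem lambertCoeff_two_mul {k : ℕ} (hk : k ≠ 0) : lambertCoeff (2 * k) = 0 := by
  obtain ⟨n, rfl⟩ := Nat.exists_eq_succ_of_ne_zero hk
  have hzero : riemannZeta (-((2 * (n + 1) : ℕ) : ℂ)) = 0 := by
    simpa using riemannZeta_neg_two_mul_nat_add_one n
  rw [lambertCoeff, hzero, mul_zero, mul_zero]

theorem lambertCoeff_two_mul_sub_one {k : ℕ} (hk : k ≠ 0) :
    lambertCoeff (2 * k - 1) =
      deriv riemannZeta (1 - 2 * (k : ℂ)) * riemannZeta (1 - 2 * (k : ℂ))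
        / ((2 * k - 1).factorial : ℂ) := by
  have hcast : -((2 * k - 1 : ℕ) : ℂ) = 1 - 2 * (k : ℂ) := by
    rw [Nat.cast_sub (by omega)]; push_cast; ring
  rw [lambertCoeff, hcast, Odd.neg_one_pow ⟨k - 1, by omega⟩]
  ring

theorem lambertCoeff_one : lambertCoeff 1 = ((logGlaisher : ℂ) - 1 / 12) / 12 := by
  have hneg : (1 : ℂ) - 2 * (1 : ℕ) = -1 := by norm_num
  have hcoeff : lambertCoeff 1 = _ := lambertCoeff_two_mul_sub_one one_ne_zero
  have hzeta := riemannZeta_one_sub_two_mul one_ne_zero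
  rw [hneg] at hcoeff hzeta
  rw [hcoeff, hzeta, deriv_riemannZeta_neg_one]
  norm_num [bernoulli_two]
  ring

theorem lambertCoeff_two_mul_sub_one_eq_bernoulli {k : ℕ} (hk : k ≠ 0) :
    lambertCoeff (2 * k - 1) = (bernoulli (2 * k) : ℂ) / k *
      ((bernoulli (2 * k) : ℂ) / (2 * (Nat.factorial (2 * k) : ℂ))
          * (Real.eulerMascheroniConstant - harmonic (2 * k - 1) + Complex.log (2 * (Real.pi : ℂ)))
        + (-1) ^ k * deriv riemannZeta (2 * (k : ℂ)) / (2 * (Real.pi : ℂ)) ^ (2 * k)) := by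
  have hfactorial : ((2 * k).factorial : ℂ) = 2 * k * ((2 * k - 1).factorial : ℂ) := by
    exact_mod_cast (Nat.mul_factorial_pred (by omega : 2 * k ≠ 0)).symm
  have hk0 : (k : ℂ) ≠ 0 := by exact_mod_cast hk
  have hfactorial0 : ((2 * k - 1).factorial : ℂ) ≠ 0 := by exact_mod_cast Nat.factorial_ne_zero _
  rw [lambertCoeff_two_mul_sub_one hk, deriv_riemannZeta_one_sub_two_mul hk,
    riemannZeta_one_sub_two_mul hk, hfactorial]
  field_simp
  ring

theorem sum_range_two_mul_add_one_of_even_eq_zero {M : Type*} [AddCommMonoid M] {f : ℕ → M}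
    (hf : ∀ k ≠ 0, f (2 * k) = 0) (n : ℕ) :
    ∑ j ∈ Finset.range (2 * n + 1), f j = f 0 + ∑ k ∈ Finset.Icc 1 n, f (2 * k - 1) := by
  induction n with
  | zero => simp
  | succ n ih =>
    rw [mul_add_one, Finset.sum_range_succ, Finset.sum_range_succ, ih, ← mul_add_one,
      hf (n + 1) n.succ_ne_zero, Finset.sum_Icc_succ_top (by omega), add_zero, add_assoc]
    rfl

theorem sum_range_lambertCoeff_mul_pow {m : ℕ} (hm : 2 ≤ m) (y : ℂ) :
    ∑ j ∈ Finset.range (2 * m - 1), lambertCoeff j * y ^ j =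
      -(1 / 4) * Complex.log (2 * (Real.pi : ℂ)) + y / 12 * ((logGlaisher : ℂ) - 1 / 12)
        + ∑ k ∈ Finset.Icc 2 (m - 1), ((bernoulli (2 * k) : ℂ) * y ^ (2 * k - 1) / (k : ℂ)) *
          ((bernoulli (2 * k) : ℂ) / (2 * (Nat.factorial (2 * k) : ℂ))
              * ((eulerGamma : ℂ) - (∑ j ∈ Finset.Icc 1 (2 * k - 1), 1 / (j : ℂ))
                + Complex.log (2 * (Real.pi : ℂ)))
            + (-1) ^ k * deriv riemannZeta (2 * (k : ℂ)) / (2 * (Real.pi : ℂ)) ^ (2 * k)) := by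
  have hterm : ∀ k ∈ Finset.Icc 2 (m - 1), lambertCoeff (2 * k - 1) * y ^ (2 * k - 1) =
      ((bernoulli (2 * k) : ℂ) * y ^ (2 * k - 1) / (k : ℂ)) *
        ((bernoulli (2 * k) : ℂ) / (2 * (Nat.factorial (2 * k) : ℂ))
            * ((eulerGamma : ℂ) - (∑ j ∈ Finset.Icc 1 (2 * k - 1), 1 / (j : ℂ))
              + Complex.log (2 * (Real.pi : ℂ)))
          + (-1) ^ k * deriv riemannZeta (2 * (k : ℂ)) / (2 * (Real.pi : ℂ)) ^ (2 * k)) := by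
    intro k hk
    rw [lambertCoeff_two_mul_sub_one_eq_bernoulli (by grind), harmonic_eq_sum_Icc, eulerGamma]
    push_cast
    simp only [one_div]
    ring
  rw [← Finset.sum_congr rfl hterm, show 2 * m - 1 = 2 * (m - 1) + 1 by omega,
    sum_range_two_mul_add_one_of_even_eq_zero
      (fun k hk => by rw [lambertCoeff_two_mul hk, zero_mul]),
    ← Finset.add_sum_Ioc_eq_sum_Icc (by omega : 1 ≤ m - 1), ← Finset.Icc_add_one_left_eq_Ioc,
    one_add_one_eq_two, show 2 * 1 - 1 = 1 from rfl, pow_one, lambertCoeff_zero, lambertCoeff_one]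
  ring

end LambertCoefficients

section StripResidues

open Set

variable {a b c : ℝ} {f g : ℂ → ℂ} {p r v w : ℂ}

/-- `f` is meromorphic at `p` with residue `r`: near `p` it is the sum of a finite principal part,
whose coefficient of `1 / (s - p)` is `r`, and of an analytic function. -/
def HasResidueAt (f : ℂ → ℂ) (p r : ℂ) : Prop :=
  ∃ (n : ℕ) (c : ℕ → ℂ) (g : ℂ → ℂ), AnalyticAt ℂ g p ∧ ∀ᶠ s in 𝓝[≠] p,
    f s = r * (s - p)⁻¹ + ∑ k ∈ Finset.range n, c k * ((s - p) ^ (k + 2))⁻¹ + g s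

theorem hasResidueAt_mul_inv_pow (hg : AnalyticAt ℂ g p) (n : ℕ) :
    HasResidueAt (fun s => g s * ((s - p) ^ (n + 1))⁻¹) p
      (iteratedDeriv n g p / (n.factorial : ℂ)) := by
  have hshift : AnalyticAt ℂ (fun z => g (p + z)) 0 :=
    AnalyticAt.fun_comp (by simpa using hg) (by fun_prop)
  obtain ⟨h, hh, htaylor⟩ := hshift.exists_eq_sum_add_pow_mul (n + 1)
  have hcoeff (i : ℕ) : iteratedDeriv i (fun z => g (p + z)) 0 = iteratedDeriv i g p := by
    simp [iteratedDeriv_comp_const_add]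
  refine ⟨n, fun k => iteratedDeriv (n - 1 - k) g p / ((n - 1 - k).factorial : ℂ),
    fun s => h (s - p), AnalyticAt.fun_comp (by simpa using hh) (by fun_prop), ?_⟩
  filter_upwards [self_mem_nhdsWithin] with s hs
  have hsp : s - p ≠ 0 := sub_ne_zero.mpr hs
  have hs_taylor := htaylor (s - p)
  simp only [hcoeff, add_sub_cancel, smul_eq_mul] at hs_taylor
  rw [Finset.sum_range_succ, ← Finset.sum_range_reflect] at hs_taylor
  have hterm : ∀ k ∈ Finset.range n,
      (s - p) ^ (n - 1 - k) / ((n - 1 - k).factorial : ℂ) * iteratedDeriv (n - 1 - k) g p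
        * ((s - p) ^ (n + 1))⁻¹ =
      iteratedDeriv (n - 1 - k) g p / ((n - 1 - k).factorial : ℂ) * ((s - p) ^ (k + 2))⁻¹ := by
    intro k hk
    have hpow : (s - p) ^ (n + 1) = (s - p) ^ (n - 1 - k) * (s - p) ^ (k + 2) := by
      rw [← pow_add]
      congr 1
      grind
    rw [hpow]
    field_simp
  rw [hs_taylor, add_mul, add_mul, Finset.sum_mul, Finset.sum_congr rfl hterm]
  field_simp
  ring

theorem HasResidueAt.sub_analyticAt (hf : HasResidueAt f p r) (hg : AnalyticAt ℂ g p) :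
    HasResidueAt (f - g) p r := by
  obtain ⟨n, c, h, hh, hfh⟩ := hf
  refine ⟨n, c, h - g, hh.sub hg, hfh.mono fun s hs => ?_⟩
  rw [Pi.sub_apply, Pi.sub_apply, hs]
  ring

theorem HasResidueAt.congr (hf : HasResidueAt f p r) (hfg : f =ᶠ[𝓝[≠] p] g) :
    HasResidueAt g p r := by
  obtain ⟨n, c, h, hh, hfh⟩ := hf
  refine ⟨n, c, h, hh, ?_⟩
  filter_upwards [hfh, hfg] with s hs hs'
  rw [← hs', hs]

/-- The integrals of `f` up the line `re s = b` and down the line `re s = a`, divided by `I` and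
truncated symmetrically, converge together to `v`. -/
def HasStripIntegral (f : ℂ → ℂ) (a b : ℝ) (v : ℂ) : Prop :=
  (Continuous fun t : ℝ => f (a + t * Complex.I)) ∧
  (Continuous fun t : ℝ => f (b + t * Complex.I)) ∧
  Tendsto (fun T : ℝ => (∫ t in (-T)..T, f (b + t * Complex.I))
    - ∫ t in (-T)..T, f (a + t * Complex.I)) atTop (𝓝 v)

theorem HasStripIntegral.add (hf : HasStripIntegral f a b v) (hg : HasStripIntegral g a b w) :
    HasStripIntegral (fun s => f s + g s) a b (v + w) := by
  refine ⟨hf.1.add hg.1, hf.2.1.add hg.2.1, (hf.2.2.add hg.2.2).congr fun T => ?_⟩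
  rw [intervalIntegral.integral_add (hf.1.intervalIntegrable _ _) (hg.1.intervalIntegrable _ _),
    intervalIntegral.integral_add (hf.2.1.intervalIntegrable _ _) (hg.2.1.intervalIntegrable _ _)]
  ring

theorem HasStripIntegral.const_mul (hf : HasStripIntegral f a b v) (z : ℂ) :
    HasStripIntegral (fun s => z * f s) a b (z * v) := by
  refine ⟨hf.1.const_mul z, hf.2.1.const_mul z, (hf.2.2.const_mul z).congr fun T => ?_⟩
  rw [intervalIntegral.integral_const_mul, intervalIntegral.integral_const_mul, mul_sub]

theorem HasStripIntegral.finsetSum {ι : Type*} {F : ι → ℂ → ℂ} {z : ι → ℂ} {s : Finset ι}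
    (hF : ∀ i ∈ s, HasStripIntegral (F i) a b (z i)) :
    HasStripIntegral (fun x => ∑ i ∈ s, F i x) a b (∑ i ∈ s, z i) := by
  classical
  induction s using Finset.induction_on with
  | empty => exact ⟨by simpa using continuous_const, by simpa using continuous_const, by simp⟩
  | insert i s hi ih =>
    simp only [Finset.sum_insert hi]
    exact (hF i (s.mem_insert_self i)).add (ih fun j hj => hF j (Finset.mem_insert_of_mem hj))

theorem HasStripIntegral.congr (hf : HasStripIntegral f a b v)
    (ha : ∀ s : ℂ, s.re = a → f s = g s) (hb : ∀ s : ℂ, s.re = b → f s = g s) :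
    HasStripIntegral g a b v := by
  have hfa : (fun t : ℝ => f (a + t * Complex.I)) = fun t : ℝ => g (a + t * Complex.I) :=
    funext fun t => ha _ (by simp)
  have hfb : (fun t : ℝ => f (b + t * Complex.I)) = fun t : ℝ => g (b + t * Complex.I) :=
    funext fun t => hb _ (by simp)
  rw [HasStripIntegral, hfa, hfb] at hf
  exact hf

theorem HasStripIntegral.integral_eq_add (hf : HasStripIntegral f a b v)
    (ha : Integrable fun t : ℝ => f (a + t * Complex.I))
    (hb : Integrable fun t : ℝ => f (b + t * Complex.I)) :
    ∫ t : ℝ, f (b + t * Complex.I) = (∫ t : ℝ, f (a + t * Complex.I)) + v := by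
  have hlim := (intervalIntegral_tendsto_integral hb tendsto_neg_atTop_atBot tendsto_id).sub
    (intervalIntegral_tendsto_integral ha tendsto_neg_atTop_atBot tendsto_id)
  rw [← tendsto_nhds_unique hlim hf.2.2, add_sub_cancel]

theorem tendsto_integral_horizontal_of_stripEnds (hab : a ≤ b)
    (hf : Tendsto f (stripEnds a b) (𝓝 0)) {σ : ℝ → ℝ} (hσ : Tendsto (|σ ·|) atTop atTop) :
    Tendsto (fun T => ∫ x in a..b, f (x + σ T * Complex.I)) atTop (𝓝 0) := by
  rw [Metric.tendsto_nhds]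
  intro ε hε
  obtain ⟨T₀, hT₀⟩ := eventually_stripEnds_iff.mp
    ((Metric.tendsto_nhds.mp hf) (ε / (b - a + 1)) (by have := sub_nonneg.mpr hab; positivity))
  filter_upwards [hσ.eventually_ge_atTop T₀] with T hT
  have hbound : ∀ x ∈ uIoc a b, ‖f (x + σ T * Complex.I)‖ ≤ ε / (b - a + 1) := by
    intro x hx
    rw [uIoc_of_le hab] at hx
    simpa using (hT₀ (x + σ T * Complex.I) (by simpa using ⟨hx.1.le, hx.2⟩) (by simpa using hT)).le
  rw [dist_zero_right]
  calc ‖∫ x in a..b, f (x + σ T * Complex.I)‖ ≤ ε / (b - a + 1) * |b - a| :=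
        intervalIntegral.norm_integral_le_of_norm_le_const hbound
    _ < ε := by
        rw [abs_of_nonneg (sub_nonneg.mpr hab), div_mul_eq_mul_div, div_lt_iff₀ (by linarith)]
        linarith

theorem continuous_line_of_analyticAt (hf : ∀ s : ℂ, s.re = c → AnalyticAt ℂ f s) :
    Continuous fun t : ℝ => f (c + t * Complex.I) :=
  continuous_iff_continuousAt.mpr fun t => ContinuousAt.comp (f := fun t : ℝ => c + t * Complex.I)
    (hf _ (by simp)).continuousAt (by fun_prop)

theorem hasStripIntegral_zero_of_analyticAt (hab : a ≤ b)
    (hf : ∀ s : ℂ, s.re ∈ Icc a b → AnalyticAt ℂ f s) (h0 : Tendsto f (stripEnds a b) (𝓝 0)) :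
    HasStripIntegral f a b 0 := by
  refine ⟨continuous_line_of_analyticAt fun s hs => hf s ⟨hs.ge, hs.le.trans hab⟩,
    continuous_line_of_analyticAt fun s hs => hf s ⟨hab.trans hs.ge, hs.le⟩, ?_⟩
  have htop := tendsto_integral_horizontal_of_stripEnds hab h0 tendsto_abs_atTop_atTop
  have hbot := tendsto_integral_horizontal_of_stripEnds hab h0 (σ := fun T => -T)
    (by simpa using tendsto_abs_atTop_atTop)
  have hlim := (hbot.sub htop).const_mul Complex.I
  rw [sub_zero, mul_zero] at hlim
  refine hlim.congr fun T => ?_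
  have hrect := Complex.integral_boundary_rect_eq_zero_of_differentiableOn f
    (a + (-T : ℝ) * Complex.I) (b + T * Complex.I) fun s hs =>
      (hf s (by simpa [uIcc_of_le hab] using hs.1)).differentiableAt.differentiableWithinAt
  simp only [Complex.add_re, Complex.ofReal_re, Complex.mul_re, Complex.I_re, mul_zero,
    Complex.ofReal_im, Complex.I_im, mul_one, sub_self, add_zero, Complex.add_im, Complex.mul_im,
    zero_add, smul_eq_mul] at hrect
  linear_combination Complex.I * hrect + ((∫ t in (-T)..T, f (a + t * Complex.I))
    - ∫ t in (-T)..T, f (b + t * Complex.I)) * Complex.I_mul_I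

theorem stripEnds_le_cobounded (a b : ℝ) : stripEnds a b ≤ Bornology.cobounded ℂ := by
  have hnorm : Tendsto (fun s : ℂ => ‖s‖) (stripEnds a b) atTop :=
    tendsto_atTop_mono Complex.abs_im_le_norm (tendsto_abs_im_stripEnds a b)
  exact tendsto_norm_atTop_iff_cobounded.mp hnorm

theorem tendsto_inv_sub_pow_stripEnds (a b : ℝ) (p : ℂ) {n : ℕ} (hn : n ≠ 0) :
    Tendsto (fun s : ℂ => ((s - p) ^ n)⁻¹) (stripEnds a b) (𝓝 0) :=
  tendsto_inv₀_cobounded.comp ((tendsto_pow_cobounded_cobounded hn).comp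
    ((tendsto_sub_const_cobounded p).mono_left (stripEnds_le_cobounded a b)))

theorem continuous_line_inv_sub_pow (hp : p.re ≠ c) (n : ℕ) :
    Continuous fun t : ℝ => ((c + t * Complex.I - p) ^ n)⁻¹ := by
  refine Continuous.inv₀ (by fun_prop) fun t => pow_ne_zero _ (sub_ne_zero.mpr ?_)
  rintro rfl
  simp at hp

theorem integral_line_eq_of_hasDerivAt (hderiv : ∀ s : ℂ, s.re = c → HasDerivAt g (f s) s)
    (hf : Continuous fun t : ℝ => f (c + t * Complex.I)) (T : ℝ) :
    ∫ t in (-T)..T, f (c + t * Complex.I) =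
      -Complex.I * (g (c + T * Complex.I) - g (c + (-T : ℝ) * Complex.I)) := by
  have hline (t : ℝ) : HasDerivAt (fun t : ℝ => -Complex.I * g (c + t * Complex.I))
      (f (c + t * Complex.I)) t := by
    have hinner : HasDerivAt (fun t : ℝ => c + t * Complex.I) Complex.I t := by
      simpa using ((Complex.ofRealCLM.hasDerivAt (x := t)).mul_const Complex.I).const_add (c : ℂ)
    refine (((hderiv _ (by simp)).comp_of_eq t hinner rfl).const_mul (-Complex.I)).congr_deriv ?_
    linear_combination -f (c + t * Complex.I) * Complex.I_mul_I
  rw [intervalIntegral.integral_eq_sub_of_hasDerivAt (fun t _ => hline t)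
    (hf.intervalIntegrable _ _), mul_sub]

theorem tendsto_line_atTop_stripEnds (c : ℝ) :
    Tendsto (fun T : ℝ => (c + T * Complex.I : ℂ)) atTop (stripEnds c c) :=
  (tendsto_line_cocompact_stripEnds c).mono_left atTop_le_cocompact

theorem tendsto_line_neg_atTop_stripEnds (c : ℝ) :
    Tendsto (fun T : ℝ => (c + (-T : ℝ) * Complex.I : ℂ)) atTop (stripEnds c c) :=
  ((tendsto_line_cocompact_stripEnds c).mono_left atBot_le_cocompact).comp tendsto_neg_atTop_atBot

theorem tendsto_integral_line_inv_sub_pow (hp : p.re ≠ c) (n : ℕ) :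
    Tendsto (fun T : ℝ => ∫ t in (-T)..T, ((c + t * Complex.I - p) ^ (n + 2))⁻¹) atTop (𝓝 0) := by
  have hderiv (s : ℂ) (hs : s.re = c) : HasDerivAt
      (fun s => -((n : ℂ) + 1)⁻¹ * ((s - p) ^ (n + 1))⁻¹) ((s - p) ^ (n + 2))⁻¹ s := by
    have hsp : s - p ≠ 0 := sub_ne_zero.mpr (by rintro rfl; exact hp hs)
    have hn : (n : ℂ) + 1 ≠ 0 := by exact_mod_cast n.succ_ne_zero
    refine (((((hasDerivAt_id s).sub_const p).fun_pow (n + 1)).fun_inv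
      (pow_ne_zero _ hsp)).const_mul _).congr_deriv ?_
    simp only [id_eq, add_tsub_cancel_right]
    push_cast
    field_simp
    ring
  have hprim := (tendsto_inv_sub_pow_stripEnds c c p n.succ_ne_zero).const_mul (-((n : ℂ) + 1)⁻¹)
  have hlim := ((hprim.comp (tendsto_line_atTop_stripEnds c)).sub
    (hprim.comp (tendsto_line_neg_atTop_stripEnds c))).const_mul (-Complex.I)
  rw [mul_zero, sub_zero, mul_zero] at hlim
  exact hlim.congr fun T =>
    (integral_line_eq_of_hasDerivAt hderiv (continuous_line_inv_sub_pow hp _) T).symm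

theorem hasStripIntegral_inv_sub_pow (ha : p.re ≠ a) (hb : p.re ≠ b) (n : ℕ) :
    HasStripIntegral (fun s => ((s - p) ^ (n + 2))⁻¹) a b 0 := by
  refine ⟨continuous_line_inv_sub_pow ha _, continuous_line_inv_sub_pow hb _, ?_⟩
  simpa using (tendsto_integral_line_inv_sub_pow hb n).sub (tendsto_integral_line_inv_sub_pow ha n)

theorem tendsto_log_add_mul_sub_log (w : ℂ) {z : ℂ} (hz : z ∈ Complex.slitPlane) :
    Tendsto (fun T : ℝ => Complex.log (w + T * z) - (Real.log T : ℂ)) atTop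
      (𝓝 (Complex.log z)) := by
  have hdir : Tendsto (fun T : ℝ => z + ((T⁻¹ : ℝ) : ℂ) * w) atTop (𝓝 z) := by
    simpa using (((Complex.continuous_ofReal.tendsto 0).comp tendsto_inv_atTop_zero).mul_const
      w).const_add z
  refine (((continuousAt_clog hz).tendsto.comp hdir).congr' ?_)
  filter_upwards [eventually_gt_atTop 0,
    hdir.eventually_ne (Complex.slitPlane_ne_zero hz)] with T hT hne
  have hfactor : w + T * z = (T : ℂ) * (z + ((T⁻¹ : ℝ) : ℂ) * w) := by
    have hT' : (T : ℂ) ≠ 0 := by exact_mod_cast hT.ne'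
    push_cast
    field_simp
    ring
  rw [Function.comp_apply, hfactor, Complex.log_ofReal_mul hT hne, add_sub_cancel_left]

theorem hasStripIntegral_inv_sub (ha : a < p.re) (hb : p.re < b) :
    HasStripIntegral (fun s => (s - p)⁻¹) a b (2 * Real.pi) := by
  have hcont {c : ℝ} (hc : p.re ≠ c) : Continuous fun t : ℝ => (c + t * Complex.I - p)⁻¹ := by
    simpa using continuous_line_inv_sub_pow hc 1
  have hright (s : ℂ) (hs : s.re = b) :
      HasDerivAt (fun s => Complex.log (s - p)) (s - p)⁻¹ s := by
    simpa using ((hasDerivAt_id s).sub_const p).clog (Or.inl (by simp [hs, hb]))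
  have hleft (s : ℂ) (hs : s.re = a) :
      HasDerivAt (fun s => Complex.log (p - s)) (s - p)⁻¹ s := by
    refine (((hasDerivAt_id s).const_sub p).clog (Or.inl (by simp [hs, ha]))).congr_deriv ?_
    rw [id_eq, ← neg_sub s p, neg_div_neg_eq, one_div]
  have hI : Complex.I ∈ Complex.slitPlane := Or.inr (by simp)
  have hI' : -Complex.I ∈ Complex.slitPlane := Or.inr (by simp)
  have hlim := (((tendsto_log_add_mul_sub_log (b - p) hI).sub
    (tendsto_log_add_mul_sub_log (b - p) hI')).sub ((tendsto_log_add_mul_sub_log (p - a) hI').sub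
    (tendsto_log_add_mul_sub_log (p - a) hI))).const_mul (-Complex.I)
  refine ⟨hcont ha.ne', hcont hb.ne, ?_⟩
  convert! hlim using 2 with T
  · rw [integral_line_eq_of_hasDerivAt hright (hcont hb.ne),
      integral_line_eq_of_hasDerivAt hleft (hcont ha.ne')]
    push_cast
    ring_nf
  · rw [Complex.log_I, Complex.log_neg_I]
    linear_combination 2 * Real.pi * Complex.I_mul_I

theorem analyticAt_inv_sub_pow {s : ℂ} (hs : s ≠ p) (n : ℕ) :
    AnalyticAt ℂ (fun s => ((s - p) ^ n)⁻¹) s :=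
  AnalyticAt.fun_inv (by fun_prop) (pow_ne_zero _ (sub_ne_zero.mpr hs))

theorem HasResidueAt.exists_principalPart (hf : HasResidueAt f p r) (hp : p.re ∈ Ioo a b) :
    ∃ P h : ℂ → ℂ, HasStripIntegral P a b (2 * Real.pi * r) ∧ Tendsto P (stripEnds a b) (𝓝 0) ∧
      (∀ s, s ≠ p → AnalyticAt ℂ P s) ∧ AnalyticAt ℂ h p ∧ f - P =ᶠ[𝓝[≠] p] h := by
  obtain ⟨n, c, h, hh, hfh⟩ := hf
  refine ⟨fun s => r * (s - p)⁻¹ + ∑ k ∈ Finset.range n, c k * ((s - p) ^ (k + 2))⁻¹, h,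
    ?_, ?_, fun s hs => ?_, hh, ?_⟩
  · simpa [mul_comm] using ((hasStripIntegral_inv_sub hp.1 hp.2).const_mul r).add
      (HasStripIntegral.finsetSum (s := Finset.range n) fun k _ =>
        (hasStripIntegral_inv_sub_pow hp.1.ne' hp.2.ne k).const_mul (c k))
  · simpa using ((tendsto_inv_sub_pow_stripEnds a b p one_ne_zero).const_mul r).add
      (tendsto_finsetSum (Finset.range n) fun k _ =>
        (tendsto_inv_sub_pow_stripEnds a b p (k + 1).succ_ne_zero).const_mul (c k))
  · simpa using (analyticAt_const.fun_mul (analyticAt_inv_sub_pow hs 1)).fun_add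
      (Finset.analyticAt_fun_sum (Finset.range n) fun k _ =>
        analyticAt_const.fun_mul (analyticAt_inv_sub_pow hs (k + 2)))
  · filter_upwards [hfh] with s hs
    rw [Pi.sub_apply, hs, add_sub_cancel_left]

theorem hasStripIntegral_of_hasResidueAt {ι : Type*} {S : Finset ι} {q r : ι → ℂ} (hab : a ≤ b)
    (hq : InjOn q S) (hS : ∀ i ∈ S, (q i).re ∈ Ioo a b)
    (hf : ∀ s : ℂ, s.re ∈ Icc a b → (∀ i ∈ S, s ≠ q i) → AnalyticAt ℂ f s)
    (hres : ∀ i ∈ S, HasResidueAt f (q i) (r i)) (h0 : Tendsto f (stripEnds a b) (𝓝 0)) :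
    HasStripIntegral f a b (2 * Real.pi * ∑ i ∈ S, r i) := by
  classical
  induction S using Finset.induction_on generalizing f with
  | empty => simpa using hasStripIntegral_zero_of_analyticAt hab (by simpa using hf) h0
  | insert i S hiS ih =>
    simp only [Finset.forall_mem_insert] at hS hf hres
    rw [Finset.coe_insert, injOn_insert (by simpa using hiS)] at hq
    obtain ⟨hp, hS⟩ := hS
    obtain ⟨P, h, hP, hP_zero, hP_analytic, hh, hfh⟩ := hres.1.exists_principalPart hp
    set p := q i
    set g : ℂ → ℂ := Function.update (f - P) p (h p)
    have hg_ne {s : ℂ} (hs : s ≠ p) : g s = f s - P s := Function.update_of_ne hs _ _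
    have hg_near {s : ℂ} (hs : s ≠ p) : g =ᶠ[𝓝 s] f - P :=
      (eventually_ne_nhds hs).mono fun _ => hg_ne
    have hg_pole : g =ᶠ[𝓝 p] h := by
      filter_upwards [eventually_nhdsWithin_iff.mp hfh] with s hs
      rcases eq_or_ne s p with rfl | hsp
      exacts [Function.update_self _ _ _, (hg_ne hsp).trans (hs hsp)]
    have hg_analytic (s : ℂ) (hs : s.re ∈ Icc a b) (hsS : ∀ j ∈ S, s ≠ q j) :
        AnalyticAt ℂ g s := by
      rcases eq_or_ne s p with rfl | hsp
      · exact hh.congr hg_pole.symm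
      · exact ((hf s hs ⟨hsp, hsS⟩).sub (hP_analytic s hsp)).congr (hg_near hsp).symm
    have hg_res (j : ι) (hj : j ∈ S) : HasResidueAt g (q j) (r j) := by
      have hjp : q j ≠ p := fun h => hq.2 ⟨j, hj, h⟩
      exact ((hres.2 j hj).sub_analyticAt (hP_analytic _ hjp)).congr
        ((hg_near hjp).symm.filter_mono nhdsWithin_le_nhds)
    have hg_zero : Tendsto g (stripEnds a b) (𝓝 0) := by
      refine (sub_zero (0 : ℂ) ▸ h0.sub hP_zero).congr' ?_
      exact (eventually_ne_stripEnds a b p).mono fun s hs => (hg_ne hs).symm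
    have hline {c : ℝ} (hc : p.re ≠ c) (s : ℂ) (hs : s.re = c) : P s + g s = f s := by
      rw [hg_ne (by rintro rfl; exact hc hs), add_sub_cancel]
    rw [Finset.sum_insert hiS, mul_add]
    exact (hP.add (ih hq.1 hS hg_analytic hg_res hg_zero)).congr (hline hp.1.ne') (hline hp.2.ne)

end StripResidues

section Jets

variable {f g : ℂ → ℂ} {p a₀ a₁ a₂ b₀ b₁ b₂ : ℂ}

/-- `f` is analytic at `p` with value and first two derivatives `a₀`, `a₁`, `a₂` there. -/
def HasJetTwo (f : ℂ → ℂ) (p a₀ a₁ a₂ : ℂ) : Prop :=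
  AnalyticAt ℂ f p ∧ f p = a₀ ∧ deriv f p = a₁ ∧ iteratedDeriv 2 f p = a₂

theorem hasJetTwo_of_analyticAt (hf : AnalyticAt ℂ f p) :
    HasJetTwo f p (f p) (deriv f p) (iteratedDeriv 2 f p) :=
  ⟨hf, rfl, rfl, rfl⟩

theorem HasJetTwo.sub (hf : HasJetTwo f p a₀ a₁ a₂) (hg : HasJetTwo g p b₀ b₁ b₂) :
    HasJetTwo (fun s => f s - g s) p (a₀ - b₀) (a₁ - b₁) (a₂ - b₂) := by
  obtain ⟨hfa, rfl, rfl, rfl⟩ := hf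
  obtain ⟨hga, rfl, rfl, rfl⟩ := hg
  exact ⟨hfa.fun_sub hga, rfl, deriv_fun_sub hfa.differentiableAt hga.differentiableAt,
    iteratedDeriv_fun_sub hfa.contDiffAt hga.contDiffAt⟩

theorem HasJetTwo.mul (hf : HasJetTwo f p a₀ a₁ a₂) (hg : HasJetTwo g p b₀ b₁ b₂) :
    HasJetTwo (fun s => f s * g s) p (a₀ * b₀) (a₁ * b₀ + a₀ * b₁)
      (a₂ * b₀ + 2 * (a₁ * b₁) + a₀ * b₂) := by
  obtain ⟨hfa, rfl, rfl, rfl⟩ := hf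
  obtain ⟨hga, rfl, rfl, rfl⟩ := hg
  refine ⟨hfa.fun_mul hga, rfl, deriv_fun_mul hfa.differentiableAt hga.differentiableAt, ?_⟩
  rw [iteratedDeriv_fun_mul hfa.contDiffAt hga.contDiffAt]
  simp only [Finset.sum_range_succ, Finset.sum_range_zero, iteratedDeriv_zero, iteratedDeriv_one,
    Nat.choose_zero_right, Nat.choose_one_right, Nat.choose_self, Nat.sub_zero, Nat.sub_self,
    Nat.add_one_sub_one, zero_add, Nat.cast_one, Nat.cast_ofNat]
  ring

theorem analyticAt_Gamma {s : ℂ} (hs : ∀ n : ℕ, s ≠ -n) : AnalyticAt ℂ Complex.Gamma s := by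
  simpa using (Complex.differentiable_one_div_Gamma.analyticAt s).fun_inv
    (inv_ne_zero (Complex.Gamma_ne_zero hs))

theorem one_ne_neg_natCast (n : ℕ) : (1 : ℂ) ≠ -n := by
  intro h
  have hsum : ((n + 1 : ℕ) : ℂ) = 0 := by push_cast; linear_combination h
  exact Nat.cast_ne_zero.mpr n.succ_ne_zero hsum

theorem eventually_Gamma_mul_Gamma_mul_sin :
    ∀ᶠ s : ℂ in 𝓝 0, Complex.Gamma (1 + s) * Complex.Gamma (1 - s) * Complex.sin (Real.pi * s) =
      Real.pi * s := by
  have hsin : HasDerivAt (fun s : ℂ => Complex.sin (Real.pi * s)) Real.pi 0 := by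
    simpa using ((hasDerivAt_id (0 : ℂ)).const_mul (Real.pi : ℂ)).csin
  filter_upwards [eventually_nhdsWithin_iff.mp (hsin.eventually_ne (by simp) (c := 0))]
    with s hs
  rcases eq_or_ne s 0 with rfl | hs0
  · simp
  · rw [add_comm, Complex.Gamma_add_one s hs0, mul_assoc s, Complex.Gamma_mul_Gamma_one_sub,
      mul_assoc, div_mul_cancel₀ _ (hs hs0), mul_comm]

/-- `Γ''(1)` is read off from the third derivative at `0` of
`Γ(1 + s) * Γ(1 - s) * sin (π * s) = π * s`. -/
theorem iteratedDeriv_two_Gamma_one : iteratedDeriv 2 Complex.Gamma 1 =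
    (Real.eulerMascheroniConstant : ℂ) ^ 2 + (Real.pi : ℂ) ^ 2 / 6 := by
  have hJet := hasJetTwo_of_analyticAt (analyticAt_Gamma one_ne_neg_natCast)
  rw [Complex.Gamma_one, Complex.hasDerivAt_Gamma_one.deriv] at hJet
  have hplus : HasJetTwo (fun s => Complex.Gamma (1 + s)) 0 1 (-Real.eulerMascheroniConstant)
      (iteratedDeriv 2 Complex.Gamma 1) :=
    ⟨AnalyticAt.fun_comp (by simpa using hJet.1) (by fun_prop), by simp,
      by simp [deriv_comp_const_add, hJet.2.2.1], by simp [iteratedDeriv_comp_const_add]⟩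
  have hminus : HasJetTwo (fun s => Complex.Gamma (1 - s)) 0 1 Real.eulerMascheroniConstant
      (iteratedDeriv 2 Complex.Gamma 1) :=
    ⟨AnalyticAt.fun_comp (by simpa using hJet.1) (by fun_prop), by simp,
      by simp [deriv_comp_const_sub, hJet.2.2.1], by simp [iteratedDeriv_comp_const_sub]⟩
  obtain ⟨hanalytic, -, hderiv, hderiv2⟩ := hplus.mul hminus
  have hsin (n : ℕ) : iteratedDeriv n (fun s : ℂ => Complex.sin (Real.pi * s)) 0 =
      (Real.pi : ℂ) ^ n * iteratedDeriv n Complex.sin 0 := by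
    simp [iteratedDeriv_comp_const_mul Complex.contDiff_sin]
  have hrhs : iteratedDeriv 3 (fun s : ℂ => Real.pi * s) 0 = 0 := by
    simp [iteratedDeriv_succ]
  have hleibniz := Filter.EventuallyEq.iteratedDeriv_eq 3 eventually_Gamma_mul_Gamma_mul_sin
  rw [iteratedDeriv_fun_mul hanalytic.contDiffAt
    (AnalyticAt.contDiffAt (by fun_prop)), hrhs] at hleibniz
  have hthird : -(Real.pi : ℂ) ^ 3 + 3 * (iteratedDeriv 2 Complex.Gamma 1 +
      -(2 * (Real.eulerMascheroniConstant * Real.eulerMascheroniConstant)) +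
      iteratedDeriv 2 Complex.Gamma 1) * Real.pi = 0 := by
    simpa [Finset.sum_range_succ, hsin, hderiv2, hderiv] using hleibniz
  have hpi : (Real.pi : ℂ) ≠ 0 := Complex.ofReal_ne_zero.mpr Real.pi_ne_zero
  apply mul_left_cancel₀ hpi
  linear_combination hthird / 6

end Jets

section LambertResidues

variable {s y : ℂ}

theorem analyticAt_riemannZeta (hs : s ≠ 1) : AnalyticAt ℂ riemannZeta s :=
  DifferentiableOn.analyticAt (s := {1}ᶜ)
    (fun _ hw => (differentiableAt_riemannZeta hw).differentiableWithinAt)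
    (isOpen_compl_singleton.mem_nhds hs)

theorem analyticAt_cpow_neg (hy : y ≠ 0) (s : ℂ) : AnalyticAt ℂ (fun s => y ^ (-s)) s :=
  Differentiable.analyticAt (fun _ => differentiableAt_id.neg.const_cpow (.inl hy)) s

theorem analyticAt_lambertKernel (hs : ∀ n : ℕ, s ≠ -n) (hs1 : s ≠ 1) :
    AnalyticAt ℂ lambertKernel s :=
  ((analyticAt_Gamma hs).fun_mul (analyticAt_riemannZeta hs1).deriv.neg).fun_mul
    (analyticAt_riemannZeta hs1)

theorem hasJetTwo_Gamma_one : HasJetTwo Complex.Gamma 1 1 (-Real.eulerMascheroniConstant)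
    ((Real.eulerMascheroniConstant : ℂ) ^ 2 + (Real.pi : ℂ) ^ 2 / 6) :=
  ⟨analyticAt_Gamma one_ne_neg_natCast, Complex.Gamma_one, Complex.hasDerivAt_Gamma_one.deriv,
    iteratedDeriv_two_Gamma_one⟩

theorem hasJetTwo_cpow_neg_one (hy : y ≠ 0) :
    HasJetTwo (fun s => y ^ (-s)) 1 y⁻¹ (-(Complex.log y * y⁻¹)) (Complex.log y ^ 2 * y⁻¹) := by
  have hderiv (s : ℂ) : HasDerivAt (fun s => y ^ (-s)) (-Complex.log y * y ^ (-s)) s :=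
    ((hasDerivAt_neg s).const_cpow (.inl hy)).congr_deriv (by ring)
  refine ⟨analyticAt_cpow_neg hy 1, Complex.cpow_neg_one y, ?_, ?_⟩
  · rw [(hderiv 1).deriv, Complex.cpow_neg_one, neg_mul]
  · rw [iteratedDeriv_succ, iteratedDeriv_one, funext fun s => (hderiv s).deriv,
      ((hderiv 1).const_mul _).deriv, Complex.cpow_neg_one]
    ring

theorem lambertKernel_eq_mul_inv_sub_one_pow (hs : s ≠ 1) :
    lambertKernel s = Complex.Gamma s * (riemannZeta₁ s - (s - 1) * deriv riemannZeta₁ s) *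
      riemannZeta₁ s * ((s - 1) ^ 3)⁻¹ := by
  have hne : s - 1 ≠ 0 := sub_ne_zero.mpr hs
  rw [lambertKernel, deriv_riemannZeta_eq_neg_inv_sub_sq_mul_add hs, riemannZeta_eq_inv_sub_mul hs]
  field_simp
  ring

theorem hasResidueAt_lambertKernel_mul_cpow_one (hy : y ≠ 0) :
    HasResidueAt (fun s => lambertKernel s * y ^ (-s)) 1 (Complex.log y ^ 2 / (2 * y) +
      ((Real.pi : ℂ) ^ 2 / 12 - (Real.eulerMascheroniConstant : ℂ) ^ 2 / 2) / y) := by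
  have hzeta := hasJetTwo_of_analyticAt (differentiable_riemannZeta₁.analyticAt 1)
  have hderivZeta := hasJetTwo_of_analyticAt (differentiable_riemannZeta₁.analyticAt 1).deriv
  have hid : HasJetTwo (fun s => s - 1) 1 0 1 0 :=
    ⟨by fun_prop, sub_self 1, by simp, by simp [iteratedDeriv_succ]⟩
  have hnumerator := ((hasJetTwo_Gamma_one.mul (hzeta.sub (hid.mul hderivZeta))).mul hzeta).mul
    (hasJetTwo_cpow_neg_one hy)
  have hres := hasResidueAt_mul_inv_pow hnumerator.1 2
  rw [hnumerator.2.2.2] at hres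
  convert hres.congr (eventually_nhdsWithin_of_forall fun s hs => ?_) using 1
  · rw [riemannZeta₁_one, deriv_riemannZeta₁_one, Nat.factorial_two, iteratedDeriv_succ,
      iteratedDeriv_one]
    field_simp
    ring
  · rw [lambertKernel_eq_mul_inv_sub_one_pow hs]
    ring

theorem Gamma_add_natCast (n : ℕ) (hs : (ascPochhammer ℂ n).eval s ≠ 0) :
    Complex.Gamma (s + n) = (ascPochhammer ℂ n).eval s * Complex.Gamma s := by
  induction n with
  | zero => simp
  | succ n ih =>
    rw [ascPochhammer_succ_eval] at hs ⊢
    rw [Nat.cast_succ, ← add_assoc, Complex.Gamma_add_one _ (right_ne_zero_of_mul hs),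
      ih (left_ne_zero_of_mul hs)]
    ring

theorem ascPochhammer_eval_neg_natCast_self (j : ℕ) :
    (ascPochhammer ℂ j).eval (-j : ℂ) = (-1) ^ j * (j.factorial : ℂ) := by
  rw [ascPochhammer_eval_neg_eq_descPochhammer, descPochhammer_eval_eq_descFactorial,
    Nat.descFactorial_self]

theorem exists_analyticAt_Gamma_eq_mul_inv (j : ℕ) : ∃ φ : ℂ → ℂ, AnalyticAt ℂ φ (-j) ∧
    φ (-j) = (-1) ^ j / (j.factorial : ℂ) ∧
    ∀ᶠ s in 𝓝[≠] (-j : ℂ), Complex.Gamma s = φ s * (s + j)⁻¹ := by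
  have hpoly : AnalyticAt ℂ (fun s => (ascPochhammer ℂ j).eval s) (-j) :=
    AnalyticAt.aeval_polynomial analyticAt_id _
  have hpolyne : (ascPochhammer ℂ j).eval (-j : ℂ) ≠ 0 := by
    rw [ascPochhammer_eval_neg_natCast_self]
    exact mul_ne_zero (pow_ne_zero _ (neg_ne_zero.mpr one_ne_zero))
      (Nat.cast_ne_zero.mpr j.factorial_ne_zero)
  refine ⟨fun s => Complex.Gamma (s + (j + 1 : ℕ)) / (ascPochhammer ℂ j).eval s,
    AnalyticAt.fun_div (AnalyticAt.fun_comp ?_ (by fun_prop)) hpoly hpolyne, ?_, ?_⟩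
  · simpa using analyticAt_Gamma one_ne_neg_natCast
  · simp only [Nat.cast_add_one, neg_add_cancel_left, Complex.Gamma_one,
      ascPochhammer_eval_neg_natCast_self]
    rw [one_div, mul_inv, ← inv_pow, inv_neg_one, div_eq_mul_inv]
  · filter_upwards [self_mem_nhdsWithin,
      (hpoly.continuousAt.eventually_ne hpolyne).filter_mono nhdsWithin_le_nhds] with s hs hpoly
    have hne : s + j ≠ 0 := fun h => hs (eq_neg_of_add_eq_zero_left h)
    rw [Gamma_add_natCast _ (by rw [ascPochhammer_succ_eval]; exact mul_ne_zero hpoly hne),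
      ascPochhammer_succ_eval]
    field_simp

theorem hasResidueAt_lambertKernel_mul_cpow_neg_natCast (hy : y ≠ 0) (j : ℕ) :
    HasResidueAt (fun s => lambertKernel s * y ^ (-s)) (-j) (lambertCoeff j * y ^ j) := by
  obtain ⟨φ, hφ, hφj, hGamma⟩ := exists_analyticAt_Gamma_eq_mul_inv j
  have hzeta := analyticAt_riemannZeta (one_ne_neg_natCast j).symm
  have hres := hasResidueAt_mul_inv_pow
    (((hφ.fun_mul hzeta.deriv.neg).fun_mul hzeta).fun_mul (analyticAt_cpow_neg hy (-j))) 0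
  convert hres.congr (hGamma.mono fun s hs => ?_) using 1
  · rw [iteratedDeriv_zero, hφj, lambertCoeff, neg_neg, Complex.cpow_natCast, Pi.neg_apply,
      Nat.factorial_zero, Nat.cast_one, div_one]
    ring
  · simp only [lambertKernel, hs, Pi.neg_apply]
    ring

end LambertResidues

section CahenMellin

variable {c : ℝ} {s y : ℂ}

theorem integrable_Gamma_line_mul_cpow (hc : 0 < c) (hy : 0 < y.re) :
    Integrable fun t : ℝ => Complex.Gamma (c + t * Complex.I) * y ^ (-(c + t * Complex.I)) := by
  have harg : |y.arg| < Real.pi / 2 := Complex.abs_arg_lt_pi_div_two_iff.mpr (.inl hy)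
  obtain ⟨θ, hθ, hθ'⟩ := exists_between harg
  refine integrable_line_mul_cpow (continuous_line_of_analyticAt fun s hs => analyticAt_Gamma ?_)
    (isBigO_Gamma_stripEnds hθ' c c) hθ (Complex.ne_zero_of_re_pos hy) le_rfl
  rintro n rfl
  simp only [Complex.neg_re, Complex.natCast_re] at hs
  linarith [n.cast_nonneg (α := ℝ)]

theorem integral_Gamma_line_mul_cpow (hc : 0 < c) (hy : 0 < y.re) :
    ∫ t : ℝ, Complex.Gamma (c + t * Complex.I) * y ^ (-(c + t * Complex.I)) =
      2 * Real.pi * Complex.exp (-y) := by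
  have hmellin {s : ℂ} (hs : 0 < s.re) :
      mellin (fun x : ℝ => Complex.exp (-(y * x))) s = Complex.Gamma s * y ^ (-s) := by
    rw [mul_comm, ← integral_cpow_mul_exp_neg_mul_Ioi_complex hs hy]
    rfl
  have hline (t : ℝ) := hmellin (s := c + t * Complex.I) (by simpa using hc)
  have hinv := mellinInv_mellin_eq c (fun x : ℝ => Complex.exp (-(y * x))) one_pos
    (integrableOn_cpow_mul_exp_neg_mul_Ioi (by simpa using hc) hy)
    ((integrable_Gamma_line_mul_cpow hc hy).congr (.of_forall fun t => (hline t).symm))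
    (by fun_prop)
  have hpi : (Real.pi : ℂ) ≠ 0 := Complex.ofReal_ne_zero.mpr Real.pi_ne_zero
  simp only [mellinInv, hline, Complex.ofReal_one, Complex.one_cpow, one_smul, mul_one] at hinv
  rw [← hinv, Complex.real_smul, ← mul_assoc]
  push_cast
  rw [mul_one_div_cancel (mul_ne_zero two_ne_zero hpi), one_mul]

theorem ofReal_mul_cpow {a : ℝ} (ha : 0 < a) (hy : y ≠ 0) (s : ℂ) :
    (a * y) ^ s = (a : ℂ) ^ s * y ^ s := by
  have ha' : (a : ℂ) ≠ 0 := Complex.ofReal_ne_zero.mpr ha.ne'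
  rw [Complex.cpow_def_of_ne_zero (mul_ne_zero ha' hy), Complex.cpow_def_of_ne_zero ha',
    Complex.cpow_def_of_ne_zero hy, Complex.log_ofReal_mul ha hy, ← Complex.exp_add,
    Complex.ofReal_log ha.le, add_mul]

theorem hasSum_mul_exp_neg_mul {ι : Type*} [Countable ι] {a : ι → ℂ} {ℓ : ι → ℝ}
    (hℓ : ∀ i, 0 < ℓ i) (ha : Summable fun i => ‖a i‖ * ℓ i ^ (-c)) (hc : 0 < c) (hy : 0 < y.re) :
    HasSum (fun i => 2 * Real.pi * (a i * Complex.exp (-(ℓ i * y))))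
      (∫ t : ℝ, (∑' i, a i * (ℓ i : ℂ) ^ (-(c + t * Complex.I))) *
        (Complex.Gamma (c + t * Complex.I) * y ^ (-(c + t * Complex.I)))) := by
  have hy0 : y ≠ 0 := Complex.ne_zero_of_re_pos hy
  have hre (i : ι) : 0 < (ℓ i * y).re := by
    rw [Complex.re_ofReal_mul]
    exact mul_pos (hℓ i) hy
  have hterm (i : ι) (t : ℝ) :
      a i * (Complex.Gamma (c + t * Complex.I) * (ℓ i * y) ^ (-(c + t * Complex.I))) =
        a i * (ℓ i : ℂ) ^ (-(c + t * Complex.I)) *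
          (Complex.Gamma (c + t * Complex.I) * y ^ (-(c + t * Complex.I))) := by
    rw [ofReal_mul_cpow (hℓ i) hy0]
    ring
  have hnorm (i : ι) : ∫ t : ℝ, ‖a i *
      (Complex.Gamma (c + t * Complex.I) * (ℓ i * y) ^ (-(c + t * Complex.I)))‖ =
        ‖a i‖ * ℓ i ^ (-c) *
          ∫ t : ℝ, ‖Complex.Gamma (c + t * Complex.I) * y ^ (-(c + t * Complex.I))‖ := by
    rw [← integral_const_mul]
    refine integral_congr_ae (.of_forall fun t => ?_)
    simp only [hterm, norm_mul, Complex.norm_cpow_eq_rpow_re_of_pos (hℓ i)]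
    simp
  have hsum := hasSum_integral_of_summable_integral_norm
    (fun i => (integrable_Gamma_line_mul_cpow hc (hre i)).const_mul (a i))
    (by simpa only [hnorm] using ha.mul_right _)
  have htsum (t : ℝ) :
      ∑' i, a i * (Complex.Gamma (c + t * Complex.I) * (ℓ i * y) ^ (-(c + t * Complex.I))) =
        (∑' i, a i * (ℓ i : ℂ) ^ (-(c + t * Complex.I))) *
          (Complex.Gamma (c + t * Complex.I) * y ^ (-(c + t * Complex.I))) := by
    simp only [hterm, tsum_mul_right]
  simp only [htsum] at hsum
  refine hsum.congr_fun fun i => ?_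
  rw [integral_const_mul, integral_Gamma_line_mul_cpow hc (hre i)]
  ring

theorem hasSum_log_mul_natCast_add_one_cpow (hs : 1 < s.re) :
    HasSum (fun n : ℕ => Complex.log ((n : ℂ) + 1) * ((n + 1 : ℝ) : ℂ) ^ (-s))
      (-deriv riemannZeta s) := by
  have habs : LSeries.abscissaOfAbsConv 1 < s.re := by
    rw [LSeries.abscissaOfAbsConv_one]
    exact_mod_cast hs
  have hderiv : deriv riemannZeta s = -LSeries (LSeries.logMul 1) s := by
    rw [← LSeries_deriv habs]
    refine EventuallyEq.deriv_eq ?_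
    filter_upwards [(isOpen_lt continuous_const Complex.continuous_re).mem_nhds hs] with w hw
    exact (LSeries_one_eq_riemannZeta hw).symm
  rw [hderiv, neg_neg]
  have hsum := (hasSum_nat_add_iff' 1).mpr (LSeriesSummable_logMul_of_lt_re habs).LSeriesHasSum
  simp only [Finset.range_one, Finset.sum_singleton, LSeries.term_zero, sub_zero] at hsum
  refine hsum.congr_fun fun n => ?_
  rw [LSeries.term_of_ne_zero n.succ_ne_zero, Complex.cpow_neg]
  simp [LSeries.logMul, div_eq_mul_inv]

theorem hasSum_log_mul_mul_cpow (hs : 1 < s.re) :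
    HasSum (fun p : ℕ × ℕ => Complex.log ((p.1 : ℂ) + 1) *
      (((p.1 + 1) * (p.2 + 1) : ℝ) : ℂ) ^ (-s)) (-deriv riemannZeta s * riemannZeta s) := by
  have hlog := hasSum_log_mul_natCast_add_one_cpow hs
  have hone := hasSum_natCast_add_one_cpow hs
  have hsummable := summable_mul_of_summable_norm hlog.summable.norm hone.summable.norm
  refine (hlog.mul hone hsummable).congr_fun fun p => ?_
  rw [Complex.ofReal_mul, Complex.mul_cpow_ofReal_nonneg (by positivity) (by positivity), mul_assoc]

theorem hasSum_exp_neg_natCast_add_one_mul (hy : 0 < y.re) :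
    HasSum (fun n : ℕ => Complex.exp (-((n + 1) * y))) (Complex.exp y - 1)⁻¹ := by
  have hnorm : ‖Complex.exp (-y)‖ < 1 := by
    rwa [Complex.norm_exp, Complex.neg_re, Real.exp_lt_one_iff, neg_lt_zero]
  have hvalue : Complex.exp (-y) * (1 - Complex.exp (-y))⁻¹ = (Complex.exp y - 1)⁻¹ := by
    rw [Complex.exp_neg, ← mul_inv, mul_sub, mul_one, mul_inv_cancel₀ (Complex.exp_ne_zero y)]
  rw [← hvalue]
  refine ((hasSum_geometric_of_norm_lt_one hnorm).mul_left _).congr_fun fun n => ?_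
  rw [← Complex.exp_nat_mul, ← Complex.exp_add]
  ring_nf

theorem hasSum_log_div_exp_sub_one (hc : 1 < c) (hy : 0 < y.re) :
    HasSum (fun n : ℕ => 2 * Real.pi *
        (Complex.log ((n : ℂ) + 1) / (Complex.exp (((n : ℂ) + 1) * y) - 1)))
      (∫ t : ℝ, lambertKernel (c + t * Complex.I) * y ^ (-(c + t * Complex.I))) := by
  have hpos (p : ℕ × ℕ) : (0 : ℝ) < (p.1 + 1) * (p.2 + 1) := by positivity
  have hsummable : Summable fun p : ℕ × ℕ =>
      ‖Complex.log ((p.1 : ℂ) + 1)‖ * ((p.1 + 1) * (p.2 + 1) : ℝ) ^ (-c) := by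
    refine (hasSum_log_mul_mul_cpow (s := c) (by simpa using hc)).summable.norm.congr fun p => ?_
    rw [norm_mul, Complex.norm_cpow_eq_rpow_re_of_pos (hpos p), Complex.neg_re, Complex.ofReal_re]
  have hpairs := hasSum_mul_exp_neg_mul hpos hsummable (one_pos.trans hc) hy
  have hkernel (t : ℝ) := (hasSum_log_mul_mul_cpow (s := c + t * Complex.I)
    (by simpa using hc)).tsum_eq
  have hfiber (n : ℕ) : HasSum (fun k : ℕ => 2 * Real.pi * (Complex.log ((n : ℂ) + 1) *
      Complex.exp (-((((n + 1) * (k + 1) : ℝ) : ℂ) * y))))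
      (2 * Real.pi * (Complex.log ((n : ℂ) + 1) / (Complex.exp (((n : ℂ) + 1) * y) - 1))) := by
    have hre : 0 < (((n : ℂ) + 1) * y).re := by
      rw [← Nat.cast_add_one, ← Complex.ofReal_natCast, Complex.re_ofReal_mul]
      positivity
    refine (((hasSum_exp_neg_natCast_add_one_mul hre).mul_left _).mul_left _).congr_fun
      fun k => ?_
    push_cast
    ring_nf
  have hintegrand (t : ℝ) :
      -deriv riemannZeta (c + t * Complex.I) * riemannZeta (c + t * Complex.I) *
          (Complex.Gamma (c + t * Complex.I) * y ^ (-(c + t * Complex.I))) =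
        lambertKernel (c + t * Complex.I) * y ^ (-(c + t * Complex.I)) := by
    rw [lambertKernel]
    ring
  simp only [hkernel, hintegrand] at hpairs
  exact hpairs.prod_fiberwise hfiber

end CahenMellin

section LambertExpansion

open Asymptotics

variable {y : ℂ} {lam : ℝ}

theorem isBigO_cpow_neg_stripEnds (hy : y ≠ 0) (a b : ℝ) :
    (fun s => y ^ (-s)) =O[stripEnds a b] fun s => Real.exp (|y.arg| * |s.im|) := by
  have hcont : Continuous fun σ : ℝ => ‖y‖ ^ (-σ) :=
    continuous_const.rpow continuous_neg fun _ => .inl (norm_ne_zero_iff.mpr hy)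
  obtain ⟨C, hC⟩ := isCompact_Icc.exists_bound_of_continuousOn (s := Set.Icc a b) hcont.continuousOn
  refine .of_bound C ?_
  filter_upwards [eventually_re_mem_stripEnds a b] with s hs
  rw [Real.norm_of_nonneg (Real.exp_pos _).le]
  refine (norm_cpow_neg_le_of_abs_arg_le hy le_rfl s).trans ?_
  gcongr
  exact (le_abs_self _).trans (hC _ hs)

theorem tendsto_lambertKernel_mul_cpow_stripEnds (hy : y ≠ 0) (harg : |y.arg| < Real.pi / 2)
    (a b : ℝ) : Tendsto (fun s => lambertKernel s * y ^ (-s)) (stripEnds a b) (𝓝 0) := by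
  obtain ⟨θ, hθ, hθ'⟩ := exists_between harg
  refine ((isBigO_lambertKernel_stripEnds hθ' a b).mul
    (isBigO_cpow_neg_stripEnds hy a b)).trans_tendsto ?_
  simp only [← Real.exp_add, ← add_mul]
  exact Real.tendsto_exp_atBot.comp
    ((tendsto_abs_im_stripEnds a b).const_mul_atTop_of_neg (by linarith))

theorem hasStripIntegral_lambertKernel_mul_cpow (hy : y ≠ 0) (harg : |y.arg| < Real.pi / 2)
    (N : ℕ) : HasStripIntegral (fun s => lambertKernel s * y ^ (-s)) (-N - 1 / 2) 2
      (2 * Real.pi * (Complex.log y ^ 2 / (2 * y) +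
        ((Real.pi : ℂ) ^ 2 / 12 - (Real.eulerMascheroniConstant : ℂ) ^ 2 / 2) / y +
        ∑ j ∈ Finset.range (N + 1), lambertCoeff j * y ^ j)) := by
  let r : ℕ → ℂ
    | 0 => Complex.log y ^ 2 / (2 * y) +
        ((Real.pi : ℂ) ^ 2 / 12 - (Real.eulerMascheroniConstant : ℂ) ^ 2 / 2) / y
    | j + 1 => lambertCoeff j * y ^ j
  have hsucc (j : ℕ) : (1 - (j + 1 : ℕ) : ℂ) = -j := by push_cast; ring
  have hres (n : ℕ) : HasResidueAt (fun s => lambertKernel s * y ^ (-s)) (1 - n) (r n) := by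
    cases n with
    | zero => simpa using hasResidueAt_lambertKernel_mul_cpow_one hy
    | succ j => rw [hsucc]; exact hasResidueAt_lambertKernel_mul_cpow_neg_natCast hy j
  have hmem (n : ℕ) (hn : n ∈ Finset.range (N + 2)) :
      (1 - n : ℂ).re ∈ Set.Ioo (-N - 1 / 2 : ℝ) 2 := by
    have hn' : (n : ℝ) ≤ N + 1 := by exact_mod_cast Finset.mem_range_succ_iff.mp hn
    simp only [Complex.sub_re, Complex.one_re, Complex.natCast_re, Set.mem_Ioo]
    constructor <;> linarith [n.cast_nonneg (α := ℝ)]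
  have hanalytic (s : ℂ) (hs : s.re ∈ Set.Icc (-N - 1 / 2 : ℝ) 2)
      (hpole : ∀ n ∈ Finset.range (N + 2), s ≠ 1 - n) :
      AnalyticAt ℂ (fun s => lambertKernel s * y ^ (-s)) s := by
    refine (analyticAt_lambertKernel (fun n hn => ?_) ?_).fun_mul (analyticAt_cpow_neg hy s)
    · have hnN : (n : ℝ) < N + 1 := by
        have hre : s.re = -n := by simp [hn]
        linarith [hs.1]
      exact hpole (n + 1) (by simpa using Nat.lt_succ_iff.mp (by exact_mod_cast hnN)) (by simp [hn])
    · simpa using hpole 0 (by simp)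
  have hstrip := hasStripIntegral_of_hasResidueAt (S := Finset.range (N + 2))
    (by linarith [N.cast_nonneg (α := ℝ)]) (fun _ _ _ _ h => by simpa using h) hmem hanalytic
    (fun n _ => hres n) (tendsto_lambertKernel_mul_cpow_stripEnds hy harg _ _)
  rwa [Finset.sum_range_succ', add_comm] at hstrip

theorem continuous_lambertKernel_line {c : ℝ} (hc : ∀ n : ℕ, c ≠ -n) (hc1 : c ≠ 1) :
    Continuous fun t : ℝ => lambertKernel (c + t * Complex.I) :=
  continuous_line_of_analyticAt fun s hs => analyticAt_lambertKernel
    (fun n hn => hc n (by simp [← hs, hn])) (fun h => hc1 (by simp [← hs, h]))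

theorem continuous_lambertKernel_line_neg_sub_half (N : ℕ) :
    Continuous fun t : ℝ => lambertKernel ((-N - 1 / 2 : ℝ) + t * Complex.I) := by
  refine continuous_lambertKernel_line (fun n hn => ?_) (by linarith [N.cast_nonneg (α := ℝ)])
  have h : (2 * N + 1 : ℝ) = 2 * n := by linarith
  norm_cast at h
  lia

theorem tsum_log_div_exp_sub_one_sub_eq (hy : y ≠ 0) (harg : |y.arg| < Real.pi / 2) (N : ℕ) :
    (∑' n : ℕ, Complex.log ((n : ℂ) + 1) / (Complex.exp (((n : ℂ) + 1) * y) - 1)) -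
        (Complex.log y ^ 2 / (2 * y) +
          ((Real.pi : ℂ) ^ 2 / 12 - (Real.eulerMascheroniConstant : ℂ) ^ 2 / 2) / y +
          ∑ j ∈ Finset.range N, lambertCoeff j * y ^ j) =
      lambertCoeff N * y ^ N + (2 * Real.pi : ℂ)⁻¹ *
        ∫ t : ℝ, lambertKernel ((-N - 1 / 2 : ℝ) + t * Complex.I) *
          y ^ (-((-N - 1 / 2 : ℝ) + t * Complex.I)) := by
  obtain ⟨θ, hθ, hθ'⟩ := exists_between harg
  have hre : 0 < y.re := (Complex.abs_arg_lt_pi_div_two_iff.mp harg).resolve_right hy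
  have hpi : (2 * Real.pi : ℂ) ≠ 0 := by simp [Real.pi_ne_zero]
  have hintegrable {c : ℝ} (hc : Continuous fun t : ℝ => lambertKernel (c + t * Complex.I)) :=
    integrable_line_mul_cpow hc (isBigO_lambertKernel_stripEnds hθ' c c) hθ hy le_rfl
  have hshift := (hasStripIntegral_lambertKernel_mul_cpow hy harg N).integral_eq_add
    (hintegrable (continuous_lambertKernel_line_neg_sub_half N))
    (hintegrable (continuous_lambertKernel_line (fun n => by linarith [n.cast_nonneg (α := ℝ)])
      (by norm_num)))
  have hsum := (hasSum_log_div_exp_sub_one one_lt_two hre).tsum_eq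
  rw [tsum_mul_left, hshift, Finset.sum_range_succ] at hsum
  rw [← eq_inv_mul_iff_mul_eq₀ hpi, mul_add, inv_mul_cancel_left₀ hpi] at hsum
  rw [hsum]
  ring

theorem isBigO_tsum_log_div_exp_sub_one_sub (hlam : lam < Real.pi / 2) (N : ℕ) :
    (fun y : ℂ =>
      (∑' n : ℕ, Complex.log ((n : ℂ) + 1) / (Complex.exp (((n : ℂ) + 1) * y) - 1)) -
        (Complex.log y ^ 2 / (2 * y) +
          ((Real.pi : ℂ) ^ 2 / 12 - (Real.eulerMascheroniConstant : ℂ) ^ 2 / 2) / y +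
          ∑ j ∈ Finset.range N, lambertCoeff j * y ^ j))
      =O[𝓝[{y : ℂ | y ≠ 0 ∧ |y.arg| ≤ lam}] 0] fun y => y ^ N := by
  obtain ⟨θ, hθ, hθ'⟩ := exists_between hlam
  have hline : (fun y : ℂ => ∫ t : ℝ, lambertKernel ((-N - 1 / 2 : ℝ) + t * Complex.I) *
      y ^ (-((-N - 1 / 2 : ℝ) + t * Complex.I)))
        =O[𝓝[{y : ℂ | y ≠ 0 ∧ |y.arg| ≤ lam}] 0] fun y => y ^ N := by
    refine ((isBigO_integral_line_mul_cpow (continuous_lambertKernel_line_neg_sub_half N)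
      (isBigO_lambertKernel_stripEnds hθ' _ _) hθ).mono inf_le_right).trans ?_
    refine .of_bound' ?_
    filter_upwards [self_mem_nhdsWithin,
      mem_nhdsWithin_of_mem_nhds (Metric.closedBall_mem_nhds 0 one_pos)] with y hy hy1
    rw [mem_closedBall_zero_iff] at hy1
    rw [Real.norm_of_nonneg (by positivity), norm_pow, ← Real.rpow_natCast]
    exact Real.rpow_le_rpow_of_exponent_ge (norm_pos_iff.mpr hy.1) hy1 (by linarith)
  refine (((isBigO_refl _ _).const_mul_left (lambertCoeff N)).add
    (hline.const_mul_left (2 * Real.pi : ℂ)⁻¹)).congr' ?_ .rfl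
  filter_upwards [self_mem_nhdsWithin] with y hy
  exact (tsum_log_div_exp_sub_one_sub_eq hy.1 (hy.2.trans_lt hlam) N).symm

end LambertExpansion

theorem stmt3 (m : ℕ) (hm : 2 ≤ m) (lam : ℝ) (hl : 0 < lam) (hl2 : lam < Real.pi / 2) :
    ∃ C > 0, ∃ r > 0, ∀ y : ℂ, 0 < ‖y‖ → ‖y‖ ≤ r → |Complex.arg y| ≤ lam →
      ‖(∑' n : ℕ, Complex.log ((n : ℂ) + 1) / (Complex.exp (((n : ℂ) + 1) * y) - 1))
        - ((Complex.log y) ^ 2 / (2 * y)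
          + ((Real.pi : ℂ) ^ 2 / 12 - (eulerGamma : ℂ) ^ 2 / 2) / y
          - (1/4) * Complex.log (2 * (Real.pi : ℂ))
          + (y / 12) * ((logGlaisher : ℂ) - 1 / 12)
          + ∑ k ∈ Finset.Icc 2 (m - 1),
              ((bernoulli (2 * k) : ℂ) * y ^ (2 * k - 1) / (k : ℂ)) *
                ((bernoulli (2 * k) : ℂ) / (2 * (Nat.factorial (2 * k) : ℂ))
                    * ((eulerGamma : ℂ) - (∑ j ∈ Finset.Icc 1 (2 * k - 1), 1 / (j : ℂ))
                      + Complex.log (2 * (Real.pi : ℂ)))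
                  + (-1) ^ k * deriv riemannZeta (2 * (k : ℂ)) / (2 * (Real.pi : ℂ)) ^ (2 * k)))‖
        ≤ C * ‖y‖ ^ (2 * m - 1) := by
  obtain ⟨C, hC, hbound⟩ :=
    (isBigO_tsum_log_div_exp_sub_one_sub hl2 (2 * m - 1)).exists_pos
  obtain ⟨r, hr, hball⟩ := (nhdsWithin_hasBasis Metric.nhds_basis_closedBall _).eventually_iff.mp
    hbound.bound
  refine ⟨C, hC, r, hr, fun y hy hyr harg => ?_⟩
  have hexpansion := hball ⟨mem_closedBall_zero_iff.mpr hyr, norm_pos_iff.mp hy, harg⟩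
  rw [norm_pow, sum_range_lambertCoeff_mul_pow hm, ← eulerGamma] at hexpansion
  convert hexpansion using 3
  ring
end

section
/- Let w ∈ ℂ with Re(w) > 0. Then Σ_{k=0}^∞ ( ψ(2k+1)/(2k)! ) w^{2k} = sinh(w) Shi(w) − cosh(w) Chi(w) + log(w) cosh(w), where ψ(2k+1) = −γ + Σ_{j=1}^{2k} 1/j. -/
/-!
Since `1 + 1/2 + ⋯ + 1/n = ∫₀¹ (1 - (1 - s)ⁿ) / s ds`, multiplying the coefficients of a power
series `f` by harmonic numbers replaces `f(w)` by `∫₀¹ (f(w) - f((1 - s) w)) / s ds`. For `f = cosh`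
the addition formula gives
`cosh w - cosh (w - s w) = sinh w · sinh (s w) - cosh w · (cosh (s w) - 1)`, so the integral is
`sinh w · Shi w - cosh w · Cinh w`, where `Cinh` is the entire part of `Chi`. The logarithm on the
right-hand side of the identity only cancels the one in `Chi`.
-/

open Filter Topology MeasureTheory

noncomputable def Shi (w : ℂ) : ℂ := ∫ s in (0:ℝ)..1, Complex.sinh ((s : ℂ) * w) / (s : ℂ)

noncomputable def Chi (w : ℂ) : ℂ :=
  (eulerGamma : ℂ) + Complex.log w + ∫ s in (0:ℝ)..1, (Complex.cosh ((s : ℂ) * w) - 1) / (s : ℂ)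

/-- The entire hyperbolic cosine integral `Cinh w = ∫₀ʷ (cosh t - 1) / t dt`, that is, `Chi` without
its constant and logarithmic terms. As in `Shi`, the segment from `0` to `w` is parametrised by
`t = s * w`. -/
noncomputable def Cinh (w : ℂ) : ℂ := ∫ s in (0 : ℝ)..1, (Complex.cosh (s * w) - 1) / (s : ℂ)

theorem Chi_eq_add_Cinh (w : ℂ) : Chi w = eulerGamma + Complex.log w + Cinh w := rfl

theorem continuous_dslope {𝕜 E : Type*} [NontriviallyNormedField 𝕜] [NormedAddCommGroup E]
    [NormedSpace 𝕜 E] {f : 𝕜 → E} {c : 𝕜} (hf : Continuous f) (hc : DifferentiableAt 𝕜 f c) :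
    Continuous (dslope f c) :=
  continuousOn_univ.1 ((continuousOn_dslope univ_mem).2 ⟨hf.continuousOn, hc⟩)

theorem intervalIntegrable_slope {E : Type*} [NormedAddCommGroup E] [NormedSpace ℝ E]
    {μ : Measure ℝ} [IsLocallyFiniteMeasure μ] [NullSingletonClass μ] {f : ℝ → E} {c : ℝ}
    (hf : Continuous f) (hc : DifferentiableAt ℝ f c) (a b : ℝ) :
    IntervalIntegrable (slope f c) μ a b := by
  refine ((continuous_dslope hf hc).intervalIntegrable a b).congr_ae (ae_restrict_of_ae ?_)
  filter_upwards [μ.ae_ne c] with s hs using dslope_of_ne f hs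

theorem inv_smul_sub_one_sub_pow_smul {𝕜 E : Type*} [Field 𝕜] [AddCommGroup E] [Module 𝕜 E]
    {s : 𝕜} (hs : s ≠ 0) (n : ℕ) (x : E) :
    s⁻¹ • (x - (1 - s) ^ n • x) = (∑ j ∈ Finset.range n, (1 - s) ^ j) • x := by
  have hgeom : (∑ j ∈ Finset.range n, (1 - s) ^ j) * s = 1 - (1 - s) ^ n := by
    simpa only [sub_sub_cancel] using geom_sum_mul_neg (1 - s) n
  calc s⁻¹ • (x - (1 - s) ^ n • x) = (s⁻¹ * (1 - (1 - s) ^ n)) • x := by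
        rw [mul_smul, sub_smul, one_smul]
    _ = (∑ j ∈ Finset.range n, (1 - s) ^ j) • x := by
        rw [← hgeom, mul_comm, mul_inv_cancel_right₀ hs]

theorem norm_geom_sum_smul_le {𝕜 E : Type*} [NormedField 𝕜] [NormedAddCommGroup E]
    [NormedSpace 𝕜 E] {t : 𝕜} (ht : ‖t‖ ≤ 1) (n : ℕ) (x : E) :
    ‖(∑ j ∈ Finset.range n, t ^ j) • x‖ ≤ n * ‖x‖ := by
  have hsum : ‖∑ j ∈ Finset.range n, t ^ j‖ ≤ n := by
    simpa using norm_sum_le_of_le (Finset.range n) fun j _ ↦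
      (norm_pow t j).trans_le (pow_le_one₀ (norm_nonneg t) ht)
  rw [norm_smul]
  gcongr

theorem integral_geom_sum_eq_harmonic (n : ℕ) :
    ∫ t in (0 : ℝ)..1, ∑ j ∈ Finset.range n, t ^ j = harmonic n := by
  rw [intervalIntegral.integral_finsetSum fun j _ ↦ (continuous_pow j).intervalIntegrable 0 1]
  simp [harmonic]

section HarmonicSum

variable {ι E : Type*} [NormedAddCommGroup E] [NormedSpace ℝ E] [CompleteSpace E]

theorem integral_geom_sum_one_sub_smul (n : ℕ) (x : E) :
    ∫ s in (0 : ℝ)..1, (∑ j ∈ Finset.range n, (1 - s) ^ j) • x = (harmonic n : ℝ) • x := by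
  rw [intervalIntegral.integral_smul_const,
    intervalIntegral.integral_comp_sub_left (fun t ↦ ∑ j ∈ Finset.range n, t ^ j), sub_self,
    sub_zero, integral_geom_sum_eq_harmonic]

theorem hasSum_harmonic_smul [Countable ι] {c : ι → E} {d : ι → ℕ} {f : ℝ → E}
    (hc : Summable fun i ↦ d i * ‖c i‖)
    (hf : ∀ t ∈ Set.Icc (0 : ℝ) 1, HasSum (fun i ↦ t ^ d i • c i) (f t)) :
    HasSum (fun i ↦ (harmonic (d i) : ℝ) • c i)
      (∫ s in (0 : ℝ)..1, s⁻¹ • (f 1 - f (1 - s))) := by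
  simp_rw [← integral_geom_sum_one_sub_smul]
  refine intervalIntegral.hasSum_integral_of_dominated_convergence (fun i _ ↦ d i * ‖c i‖)
    (fun i ↦ Continuous.aestronglyMeasurable (by fun_prop)) (fun i ↦ .of_forall fun s hs ↦ ?bound)
    (.of_forall fun _ _ ↦ hc) intervalIntegrable_const (.of_forall fun s hs ↦ ?sum)
  all_goals rw [Set.uIoc_of_le zero_le_one] at hs
  case bound =>
    exact norm_geom_sum_smul_le (abs_le.2 ⟨by linarith [hs.2], by linarith [hs.1]⟩) _ _
  case sum =>
    simp_rw [← inv_smul_sub_one_sub_pow_smul hs.1.ne']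
    have hf_one : HasSum c (f 1) := by simpa using hf 1 (by simp)
    exact (hf_one.sub (hf (1 - s) ⟨by linarith [hs.2], by linarith [hs.1]⟩)).const_smul s⁻¹

end HarmonicSum

theorem summable_natCast_mul_pow_div_factorial (x : ℝ) :
    Summable fun n : ℕ ↦ n * (x ^ n / n.factorial) := by
  rw [← summable_nat_add_iff 1]
  refine ((Real.summable_pow_div_factorial x).mul_left x).congr fun n ↦ ?_
  rw [Nat.factorial_succ, pow_succ]
  push_cast
  field_simp

theorem integral_inv_smul_cosh_sub_cosh (w : ℂ) :
    ∫ s in (0 : ℝ)..1, s⁻¹ • (Complex.cosh w - Complex.cosh ((1 - s : ℝ) * w)) =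
      Complex.sinh w * Shi w - Complex.cosh w * Cinh w := by
  have hsinh : IntervalIntegrable (fun s : ℝ ↦ Complex.sinh (s * w) / s) volume 0 1 := by
    simpa [slope_fun_def, div_eq_inv_mul] using
      intervalIntegrable_slope (f := fun s : ℝ ↦ Complex.sinh (s * w)) (c := 0)
        (by fun_prop) (by fun_prop) 0 1
  have hcosh : IntervalIntegrable (fun s : ℝ ↦ (Complex.cosh (s * w) - 1) / s) volume 0 1 := by
    simpa [slope_fun_def, div_eq_inv_mul] using
      intervalIntegrable_slope (f := fun s : ℝ ↦ Complex.cosh (s * w)) (c := 0)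
        (by fun_prop) (by fun_prop) 0 1
  rw [Shi, Cinh, ← intervalIntegral.integral_const_mul, ← intervalIntegral.integral_const_mul,
    ← intervalIntegral.integral_sub (hsinh.const_mul _) (hcosh.const_mul _)]
  refine intervalIntegral.integral_congr fun s _ ↦ ?_
  have hadd : Complex.cosh ((1 - s : ℝ) * w) =
      Complex.cosh w * Complex.cosh (s * w) - Complex.sinh w * Complex.sinh (s * w) := by
    rw [← Complex.cosh_sub, Complex.ofReal_sub, Complex.ofReal_one, sub_mul, one_mul]
  simp only [hadd, Complex.real_smul, Complex.ofReal_inv]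
  ring

theorem hasSum_harmonic_mul_cosh_coeff (w : ℂ) :
    HasSum (fun k : ℕ ↦ (harmonic (2 * k) : ℂ) * (w ^ (2 * k) / (2 * k).factorial))
      (Complex.sinh w * Shi w - Complex.cosh w * Cinh w) := by
  have hsummable : Summable fun k : ℕ ↦
      ((2 * k : ℕ) : ℝ) * ‖w ^ (2 * k) / ((2 * k).factorial : ℂ)‖ := by
    simpa only [norm_div, norm_pow, Complex.norm_natCast, Function.comp_def] using
      (summable_natCast_mul_pow_div_factorial ‖w‖).comp_injective
        (mul_right_injective₀ (two_ne_zero : (2 : ℕ) ≠ 0))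
  have hcosh : ∀ t ∈ Set.Icc (0 : ℝ) 1,
      HasSum (fun k : ℕ ↦ t ^ (2 * k) • (w ^ (2 * k) / ((2 * k).factorial : ℂ)))
        (Complex.cosh (t * w)) := fun t _ ↦ by
    simpa [mul_pow, mul_div_assoc] using Complex.hasSum_cosh (t * w)
  simpa [← integral_inv_smul_cosh_sub_cosh] using hasSum_harmonic_smul hsummable hcosh

theorem stmt10_general (w : ℂ) :
    HasSum (fun k : ℕ ↦ ((-(eulerGamma : ℂ) + ∑ j ∈ Finset.Icc 1 (2 * k), 1 / (j : ℂ))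
        / (Nat.factorial (2 * k) : ℂ)) * w ^ (2 * k))
      (Complex.sinh w * Shi w - Complex.cosh w * (eulerGamma + Cinh w)) := by
  have hsum := (hasSum_harmonic_mul_cosh_coeff w).sub
    ((Complex.hasSum_cosh w).mul_left (eulerGamma : ℂ))
  rw [mul_add, mul_comm _ (eulerGamma : ℂ), sub_add_eq_sub_sub_swap]
  refine hsum.congr_fun fun k ↦ ?_
  simp only [harmonic_eq_sum_Icc, Rat.cast_sum, Rat.cast_inv, Rat.cast_natCast, one_div]
  ring

theorem stmt10 (w : ℂ) (hw : 0 < w.re) :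
    ∑' k : ℕ, ((-(eulerGamma : ℂ) + ∑ j ∈ Finset.Icc 1 (2 * k), 1 / (j : ℂ))
        / (Nat.factorial (2 * k) : ℂ)) * w ^ (2 * k) =
      Complex.sinh w * Shi w - Complex.cosh w * Chi w + Complex.log w * Complex.cosh w := by
  rw [(stmt10_general w).tsum_eq, Chi_eq_add_Cinh]
  ring
end

section
/- Let z ∈ ℂ with Re(z) > 0. Then ψ₁(z) = (1/2) log²(z) − ∫_0^∞ e^{−zt} ( 1/t − 1/(1 − e^{−t}) ) ( γ + log(t) ) dt. -/
open Filter Topology MeasureTheory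

noncomputable def psi1 (z : ℂ) : ℂ :=
  -(gamma1 : ℂ) - Complex.log z / z -
    ∑' n : ℕ, (Complex.log (((n : ℂ) + 1) + z) / (((n : ℂ) + 1) + z)
      - Complex.log ((n : ℂ) + 1) / ((n : ℂ) + 1))

/-!
Write `g t = γ + log t` and `k t = 1 / t - 1 / (1 - e⁻ᵗ)`. The Laplace transform of `g` is
`-log a / a`: on the positive reals this is `Γ'(1) = -γ`, and both sides are holomorphic on the
right half-plane. Hence the right-hand side `F z` of the representation, which is `log² z / 2` minus
the Laplace transform of `k g`, satisfies `F (z + 1) = F z + log z / z`: the factor `1 - e⁻ᵗ` that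
the shift introduces turns `k` into `(1 - e⁻ᵗ) / t - 1`, and multiplication by `(1 - e⁻ᵗ) / t`
amounts to averaging the Laplace transform over `[z, z + 1]`. Moreover `F z - log² z / 2` tends to
`0` along `z, z + 1, z + 2, …`, so telescoping expresses `F z` as the limit of
`log² n / 2 - ∑_{m < n} log (z + m) / (z + m)`. At `z = 1` this is `-γ₁`, and the difference of two
such limits sums the series that defines `ψ₁`.
-/

section LaplaceTransform

variable {E : Type*} [NormedAddCommGroup E] [NormedSpace ℂ E] {f g : ℝ → E} {a b : ℂ}

/-- The one-sided Laplace transform `a ↦ ∫₀^∞ e^{-at} f(t) dt`. -/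
noncomputable def laplaceTransform (f : ℝ → E) (a : ℂ) : E :=
  ∫ t in Set.Ioi (0 : ℝ), Complex.exp (-a * t) • f t

/-- Absolute convergence of the integral defining the Laplace transform of `f` at `a`. -/
def LaplaceConvergent (f : ℝ → E) (a : ℂ) : Prop :=
  IntegrableOn (fun t : ℝ => Complex.exp (-a * t) • f t) (Set.Ioi 0)

lemma norm_exp_neg_mul_ofReal_smul (a : ℂ) (t : ℝ) (v : E) :
    ‖Complex.exp (-a * t) • v‖ = Real.exp (-a.re * t) * ‖v‖ := by
  rw [norm_smul, Complex.norm_exp, Complex.re_mul_ofReal, Complex.neg_re]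

lemma norm_exp_neg_mul_ofReal_smul_le (hab : a.re ≤ b.re) {t : ℝ} (ht : 0 ≤ t) (v : E) :
    ‖Complex.exp (-b * t) • v‖ ≤ ‖Complex.exp (-a * t) • v‖ := by
  rw [norm_exp_neg_mul_ofReal_smul, norm_exp_neg_mul_ofReal_smul]
  gcongr

namespace LaplaceConvergent

lemma aestronglyMeasurable (hf : LaplaceConvergent f a) :
    AEStronglyMeasurable f (volume.restrict (Set.Ioi 0)) := by
  have hexp : Continuous fun t : ℝ => Complex.exp (a * t) := by fun_prop
  refine (hexp.aestronglyMeasurable.smul (Integrable.aestronglyMeasurable hf)).congr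
    (.of_forall fun t => ?_)
  simp [smul_smul, ← Complex.exp_add]

lemma of_norm_le (hf : LaplaceConvergent f a)
    (hg : AEStronglyMeasurable g (volume.restrict (Set.Ioi 0))) (C : ℝ)
    (hle : ∀ t : ℝ, 0 < t →
      ‖Complex.exp (-b * t) • g t‖ ≤ C * ‖Complex.exp (-a * t) • f t‖) :
    LaplaceConvergent g b := by
  have hexp : Continuous fun t : ℝ => Complex.exp (-b * t) := by fun_prop
  exact (hf.norm.const_mul C).mono' (hexp.aestronglyMeasurable.smul hg)
    (ae_restrict_of_forall_mem measurableSet_Ioi hle)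

lemma mono (hf : LaplaceConvergent f a) (hab : a.re ≤ b.re) : LaplaceConvergent f b :=
  hf.of_norm_le hf.aestronglyMeasurable 1 fun t ht => by
    rw [one_mul]
    exact norm_exp_neg_mul_ofReal_smul_le hab ht.le _

lemma add (hf : LaplaceConvergent f a) (hg : LaplaceConvergent g a) :
    LaplaceConvergent (fun t => f t + g t) a := by
  simpa only [LaplaceConvergent, smul_add] using! Integrable.add hf hg

lemma sub (hf : LaplaceConvergent f a) (hg : LaplaceConvergent g a) :
    LaplaceConvergent (fun t => f t - g t) a := by
  simpa only [LaplaceConvergent, smul_sub] using! Integrable.sub hf hg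

lemma bdd_smul {φ : ℝ → ℂ} {C : ℝ} (hf : LaplaceConvergent f a)
    (hφ : AEStronglyMeasurable φ (volume.restrict (Set.Ioi 0)))
    (hC : ∀ t : ℝ, 0 < t → ‖φ t‖ ≤ C) : LaplaceConvergent (fun t => φ t • f t) a :=
  hf.of_norm_le (hφ.smul hf.aestronglyMeasurable) C fun t ht => by
    rw [smul_comm, norm_smul]
    gcongr
    exact hC t ht

lemma ofReal_smul (hf : LaplaceConvergent f a) (hab : a.re < b.re) :
    LaplaceConvergent (fun t => (t : ℂ) • f t) b := by
  have hδ : 0 < b.re - a.re := sub_pos.2 hab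
  refine hf.of_norm_le (Complex.continuous_ofReal.aestronglyMeasurable.smul
    hf.aestronglyMeasurable) (b.re - a.re)⁻¹ fun t ht => ?_
  have ht_le : t ≤ (b.re - a.re)⁻¹ * Real.exp ((b.re - a.re) * t) := by
    rw [← div_eq_inv_mul, le_div_iff₀' hδ]
    linarith [Real.add_one_le_exp ((b.re - a.re) * t)]
  calc ‖Complex.exp (-b * t) • (t : ℂ) • f t‖
    _ = Real.exp (-b.re * t) * (t * ‖f t‖) := by
        rw [norm_exp_neg_mul_ofReal_smul, norm_smul, Complex.norm_real, Real.norm_of_nonneg ht.le]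
    _ ≤ Real.exp (-b.re * t) * ((b.re - a.re)⁻¹ * Real.exp ((b.re - a.re) * t) * ‖f t‖) := by
        gcongr
    _ = (b.re - a.re)⁻¹ * (Real.exp (-b.re * t + (b.re - a.re) * t) * ‖f t‖) := by
        rw [Real.exp_add]
        ring
    _ = (b.re - a.re)⁻¹ * ‖Complex.exp (-a * t) • f t‖ := by
        rw [norm_exp_neg_mul_ofReal_smul]
        ring_nf

end LaplaceConvergent

lemma laplaceTransform_add (hf : LaplaceConvergent f a) (hg : LaplaceConvergent g a) :
    laplaceTransform (fun t => f t + g t) a = laplaceTransform f a + laplaceTransform g a := by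
  simpa only [laplaceTransform, smul_add] using integral_add hf hg

lemma laplaceTransform_sub (hf : LaplaceConvergent f a) (hg : LaplaceConvergent g a) :
    laplaceTransform (fun t => f t - g t) a = laplaceTransform f a - laplaceTransform g a := by
  simpa only [laplaceTransform, smul_sub] using integral_sub hf hg

lemma laplaceTransform_congr (hfg : ∀ t : ℝ, 0 < t → f t = g t) :
    laplaceTransform f a = laplaceTransform g a :=
  setIntegral_congr_fun measurableSet_Ioi fun t ht => by
    simp only [hfg t ht]

lemma laplaceTransform_sub_laplaceTransform_add (hf : LaplaceConvergent f a) (hb : 0 ≤ b.re) :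
    laplaceTransform f a - laplaceTransform f (a + b) =
      laplaceTransform (fun t => (1 - Complex.exp (-b * t)) • f t) a := by
  have hf' : LaplaceConvergent f (a + b) := hf.mono (by simpa)
  rw [laplaceTransform, laplaceTransform, ← integral_sub hf hf']
  refine setIntegral_congr_fun measurableSet_Ioi fun t _ => ?_
  simp only [neg_add, add_mul, Complex.exp_add, mul_smul, sub_smul, one_smul, smul_sub]

lemma hasDerivAt_laplaceTransform (hf : LaplaceConvergent f a) (hab : a.re < b.re) :
    HasDerivAt (laplaceTransform f) (laplaceTransform (fun t => -((t : ℂ) • f t)) b) b := by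
  obtain ⟨m, ham, hmb⟩ := exists_between hab
  have hmeas (c : ℂ) : AEStronglyMeasurable (fun t : ℝ => Complex.exp (-c * t) • f t)
      (volume.restrict (Set.Ioi 0)) :=
    (by fun_prop : Continuous fun t : ℝ => Complex.exp (-c * t)).aestronglyMeasurable.smul
      hf.aestronglyMeasurable
  have hbound : LaplaceConvergent (fun t => (t : ℂ) • f t) (m : ℂ) := hf.ofReal_smul (by simpa)
  have hderiv : LaplaceConvergent (fun t => (t : ℂ) • f t) b := hf.ofReal_smul hab
  refine (hasDerivAt_integral_of_dominated_loc_of_deriv_le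
    (F' := fun (c : ℂ) (t : ℝ) => Complex.exp (-c * t) • -((t : ℂ) • f t))
    ((isOpen_lt continuous_const Complex.continuous_re).mem_nhds hmb)
    (.of_forall hmeas) (hf.mono hab.le)
    (by simpa only [smul_neg] using! hderiv.neg.aestronglyMeasurable)
    (ae_restrict_of_forall_mem measurableSet_Ioi fun t ht c hc => ?_) hbound.norm
    (.of_forall fun t c _ => ?_)).2
  · rw [smul_neg, norm_neg]
    exact norm_exp_neg_mul_ofReal_smul_le (a := m) (le_of_lt hc) (le_of_lt ht) _
  · have hexp : HasDerivAt (fun c : ℂ => Complex.exp (-c * t)) (Complex.exp (-c * t) * -t) c := by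
      simpa using ((hasDerivAt_neg c).mul_const (t : ℂ)).cexp
    simpa [mul_smul] using hexp.smul_const (f t)

lemma tendsto_laplaceTransform_add_ofReal_atTop (hf : LaplaceConvergent f a) :
    Tendsto (fun x : ℝ => laplaceTransform f (a + x)) atTop (𝓝 0) := by
  have hlim : Tendsto (fun x : ℝ => laplaceTransform f (a + x)) atTop
      (𝓝 (∫ _ in Set.Ioi (0 : ℝ), (0 : E))) := by
    refine tendsto_integral_filter_of_dominated_convergence
      (fun t : ℝ => ‖Complex.exp (-a * t) • f t‖) ?_ ?_ hf.norm ?_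
    · filter_upwards [eventually_ge_atTop 0] with x hx
      exact Integrable.aestronglyMeasurable (hf.mono (b := a + x) (by simpa))
    · filter_upwards [eventually_ge_atTop 0] with x hx
      refine ae_restrict_of_forall_mem measurableSet_Ioi fun t ht => ?_
      exact norm_exp_neg_mul_ofReal_smul_le (by simpa) (le_of_lt ht) _
    · refine ae_restrict_of_forall_mem measurableSet_Ioi fun t (ht : 0 < t) => ?_
      rw [tendsto_zero_iff_norm_tendsto_zero]
      simp only [norm_exp_neg_mul_ofReal_smul]
      have hdecay : Tendsto (fun x : ℝ => Real.exp (-(a + x).re * t)) atTop (𝓝 0) := by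
        refine Real.tendsto_exp_atBot.comp (Tendsto.atBot_mul_const ht ?_)
        exact tendsto_neg_atTop_atBot.comp
          (by simpa using tendsto_atTop_add_const_left _ a.re tendsto_id)
      simpa using hdecay.mul_const ‖f t‖
  simpa using hlim

lemma integrable_uncurry_exp_smul (hf : LaplaceConvergent f a) (M : ℝ) :
    Integrable (Function.uncurry fun x t : ℝ => Complex.exp (-(a + x) * t) • f t)
      ((volume.restrict (Set.Ioc 0 M)).prod (volume.restrict (Set.Ioi 0))) := by
  have hexp : Continuous fun p : ℝ × ℝ => Complex.exp (-(a + p.1) * p.2) := by fun_prop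
  have hf' : Integrable (fun t : ℝ => Complex.exp (-a * t) • f t) (volume.restrict (Set.Ioi 0)) :=
    hf
  refine (hf'.comp_snd (volume.restrict (Set.Ioc 0 M))).mono
    (hexp.aestronglyMeasurable.smul hf.aestronglyMeasurable.comp_snd) ?_
  rw [Measure.prod_restrict]
  refine ae_restrict_of_forall_mem (measurableSet_Ioc.prod measurableSet_Ioi) ?_
  rintro ⟨x, t⟩ ⟨⟨hx, -⟩, ht⟩
  exact norm_exp_neg_mul_ofReal_smul_le (by simpa using le_of_lt hx) (le_of_lt ht) _

lemma intervalIntegral_laplaceTransform_add [CompleteSpace E] (hf : LaplaceConvergent f a)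
    {M : ℝ} (hM : 0 ≤ M) :
    ∫ x in (0 : ℝ)..M, laplaceTransform f (a + x) =
      laplaceTransform (fun t => ((1 - Complex.exp (-M * t)) / t) • f t) a := by
  have hswap := intervalIntegral_integral_swap (a := 0) (b := M)
    (by simpa only [Set.uIoc_of_le hM] using integrable_uncurry_exp_smul hf M)
  refine hswap.trans (setIntegral_congr_fun measurableSet_Ioi fun t (ht : 0 < t) => ?_)
  have ht0 : -(t : ℂ) ≠ 0 := by simpa using ht.ne'
  calc ∫ x in (0 : ℝ)..M, Complex.exp (-(a + x) * t) • f t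
    _ = (∫ x in (0 : ℝ)..M, Complex.exp (-a * t) * Complex.exp (-t * x)) • f t := by
        rw [← intervalIntegral.integral_smul_const]
        refine intervalIntegral.integral_congr fun x _ => ?_
        simp only [← Complex.exp_add]
        ring_nf
    _ = Complex.exp (-a * t) • ((1 - Complex.exp (-M * t)) / t) • f t := by
        rw [intervalIntegral.integral_const_mul, integral_exp_mul_complex ht0, mul_smul]
        simp only [Complex.ofReal_zero, mul_zero, Complex.exp_zero, neg_mul, mul_comm (M : ℂ)]
        rw [div_neg, ← neg_div, neg_sub]

lemma laplaceConvergent_const (ha : 0 < a.re) (v : E) : LaplaceConvergent (fun _ => v) a :=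
  Integrable.smul_const (integrableOn_exp_mul_complex_Ioi (by simpa) 0) v

lemma laplaceTransform_const [CompleteSpace E] (ha : 0 < a.re) (v : E) :
    laplaceTransform (fun _ => v) a = a⁻¹ • v := by
  rw [laplaceTransform, integral_smul_const, integral_exp_mul_complex_Ioi (by simpa)]
  simp

end LaplaceTransform

section EulerLog

lemma add_ofReal_re_pos {a : ℂ} (ha : 0 < a.re) {x : ℝ} (hx : 0 ≤ x) : 0 < (a + x).re := by
  simpa using add_pos_of_pos_of_nonneg ha hx

lemma eqOn_halfSpace_of_eq_ofReal {E : Type*} [NormedAddCommGroup E] [NormedSpace ℂ E]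
    [CompleteSpace E] {f g : ℂ → E} {σ : ℝ} (hf : DifferentiableOn ℂ f {a | σ < a.re})
    (hg : DifferentiableOn ℂ g {a | σ < a.re}) (hfg : ∀ r : ℝ, σ < r → f r = g r) :
    Set.EqOn f g {a | σ < a.re} := by
  have hopen : IsOpen {a : ℂ | σ < a.re} := isOpen_lt continuous_const Complex.continuous_re
  have hreal : Tendsto ((↑) : ℝ → ℂ) (𝓝[≠] (σ + 1)) (𝓝[≠] ((σ + 1 : ℝ) : ℂ)) :=
    Complex.ofRealCLM.hasDerivAt.tendsto_nhdsNE (by simp)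
  have hev : ∀ᶠ r in 𝓝[≠] (σ + 1), σ < r :=
    nhdsWithin_le_nhds (lt_mem_nhds (lt_add_one σ))
  exact (hf.analyticOnNhd hopen).eqOn_of_preconnected_of_frequently_eq (hg.analyticOnNhd hopen)
    (convex_halfSpace_re_gt σ).isPreconnected (by simp : ((σ + 1 : ℝ) : ℂ) ∈ _)
    (hreal.frequently (hev.mono hfg).frequently)

/-- The function `t ↦ γ + log t`. The constant is chosen so that its Laplace transform is
`-log a / a`. -/
noncomputable def eulerLog (t : ℝ) : ℂ := eulerGamma + Real.log t

lemma hasDerivAt_mellin_exp_neg {r : ℝ} (hr : 0 < r) :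
    MellinConvergent (fun t => Real.log t • Complex.exp (-(r * t))) 1 ∧
      HasDerivAt (mellin fun t : ℝ => Complex.exp (-(r * t)))
        (mellin (fun t => Real.log t • Complex.exp (-(r * t))) 1) 1 := by
  have hcont : Continuous fun t : ℝ => Complex.exp (-(r * t)) := by fun_prop
  refine mellin_hasDerivAt_of_isBigO_rpow (a := 2) (b := 0)
    (hcont.locallyIntegrable.locallyIntegrableOn _) ?_ (by norm_num) ?_ (by norm_num)
  · refine (Asymptotics.isBigO_of_le _ fun t => ?_).trans
      (isLittleO_exp_neg_mul_rpow_atTop hr (-2)).isBigO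
    simp [Complex.norm_exp]
  · simpa using (hcont.continuousAt (x := 0)).continuousWithinAt.tendsto.isBigO_one ℝ

lemma mellin_log_smul_exp_neg {r : ℝ} (hr : 0 < r) :
    mellin (fun t => Real.log t • Complex.exp (-(r * t))) 1 =
      -(Complex.log r + Real.eulerMascheroniConstant) / r := by
  have hmellin : mellin (fun t : ℝ => Complex.exp (-(r * t))) =ᶠ[𝓝 1]
      fun s : ℂ => (1 / (r : ℂ)) ^ s * Complex.Gamma s := by
    filter_upwards [Complex.continuous_re.continuousAt.eventually (lt_mem_nhds
      (by simp : (0 : ℝ) < (1 : ℂ).re))] with s hs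
    simpa [mellin] using Complex.integral_cpow_mul_exp_neg_mul_Ioi hs hr
  have hr0 : (1 / (r : ℂ)) ≠ 0 := by simpa using hr.ne'
  have hderiv := ((hasDerivAt_id (1 : ℂ)).const_cpow (.inl hr0)).mul Complex.hasDerivAt_Gamma_one
  rw [(hasDerivAt_mellin_exp_neg hr).2.unique (hderiv.congr_of_eventuallyEq hmellin)]
  have hlog : Complex.log (1 / r) = -Complex.log r := by
    rw [one_div, Complex.log_inv _ (by simpa [Complex.arg_ofReal_of_nonneg hr.le] using
      Real.pi_pos.ne)]
  rw [hlog, id, Complex.cpow_one, Complex.Gamma_one]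
  ring

lemma laplaceConvergent_log {r : ℝ} (hr : 0 < r) :
    LaplaceConvergent (fun t : ℝ => (Real.log t : ℂ)) r := by
  refine (hasDerivAt_mellin_exp_neg hr).1.congr_fun (fun t _ => ?_) measurableSet_Ioi
  simp [mul_comm]

lemma laplaceConvergent_eulerLog {a : ℂ} (ha : 0 < a.re) : LaplaceConvergent eulerLog a :=
  ((laplaceConvergent_const (by simpa) _).add (laplaceConvergent_log ha)).mono (by simp)

lemma laplaceTransform_log_ofReal {r : ℝ} (hr : 0 < r) :
    laplaceTransform (fun t : ℝ => (Real.log t : ℂ)) r =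
      -(Complex.log r + Real.eulerMascheroniConstant) / r := by
  rw [← mellin_log_smul_exp_neg hr]
  refine setIntegral_congr_fun measurableSet_Ioi fun t _ => ?_
  simp [mul_comm]

lemma laplaceTransform_eulerLog_ofReal {r : ℝ} (hr : 0 < r) :
    laplaceTransform eulerLog r = -Complex.log r / r := by
  calc laplaceTransform eulerLog r
    _ = (r : ℂ)⁻¹ • (eulerGamma : ℂ) + -(Complex.log r + Real.eulerMascheroniConstant) / r := by
        rw [← laplaceTransform_const (by simpa), ← laplaceTransform_log_ofReal hr]
        exact laplaceTransform_add (laplaceConvergent_const (by simpa) _)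
          (laplaceConvergent_log hr)
    _ = -Complex.log r / r := by
        rw [eulerGamma, smul_eq_mul]
        ring

lemma laplaceTransform_eulerLog {a : ℂ} (ha : 0 < a.re) :
    laplaceTransform eulerLog a = -Complex.log a / a := by
  refine eqOn_halfSpace_of_eq_ofReal (σ := 0) (g := fun b => -Complex.log b / b)
    (fun b (hb : 0 < b.re) => ?_) (fun b (hb : 0 < b.re) => ?_)
    (fun _ => laplaceTransform_eulerLog_ofReal) ha
  · have hconv : LaplaceConvergent eulerLog (b / 2) := laplaceConvergent_eulerLog (by simpa)
    exact (hasDerivAt_laplaceTransform hconv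
      (by simpa using hb)).differentiableAt.differentiableWithinAt
  · exact ((Complex.differentiableAt_log (.inl hb)).neg.div differentiableAt_id
      (Complex.ne_zero_of_re_pos hb)).differentiableWithinAt

lemma integral_log_add_div_add {a : ℂ} (ha : 0 < a.re) {M : ℝ} (hM : 0 ≤ M) :
    ∫ x in (0 : ℝ)..M, Complex.log (a + x) / (a + x) =
      (Complex.log (a + M) ^ 2 - Complex.log a ^ 2) / 2 := by
  have hre : ∀ x ∈ Set.uIcc 0 M, 0 < (a + x).re := fun x hx =>
    add_ofReal_re_pos ha (Set.uIcc_of_le hM ▸ hx).1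
  have hderiv : ∀ x ∈ Set.uIcc 0 M, HasDerivAt (fun x : ℝ => Complex.log (a + x) ^ 2 / 2)
      (Complex.log (a + x) / (a + x)) x := fun x hx => by
    have hadd : HasDerivAt (fun x : ℝ => a + (x : ℂ)) 1 x := by
      simpa using (hasDerivAt_id x).ofReal_comp.const_add a
    refine (((hadd.clog_real (.inl (hre x hx))).pow 2).div_const 2).congr_deriv ?_
    push_cast
    ring
  have hcont : ContinuousOn (fun x : ℝ => Complex.log (a + x) / (a + x)) (Set.uIcc 0 M) :=
    fun x hx => by
      have hadd : ContinuousAt (fun x : ℝ => a + (x : ℂ)) x := by fun_prop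
      exact ((hadd.clog (.inl (hre x hx))).div hadd
        (Complex.ne_zero_of_re_pos (hre x hx))).continuousWithinAt
  rw [intervalIntegral.integral_eq_sub_of_hasDerivAt hderiv hcont.intervalIntegrable,
    Complex.ofReal_zero, add_zero, sub_div]

end EulerLog

section Psi1Integral

/-- The kernel `1 / t - 1 / (1 - e⁻ᵗ)` of Binet's integral `ψ(z) = log z + ∫₀^∞ e^{-zt} k(t) dt` for
the digamma function. Only its values at `t > 0` matter. -/
noncomputable def digammaKernel (t : ℝ) : ℂ := 1 / (t : ℂ) - 1 / (1 - Complex.exp (-(t : ℂ)))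

lemma measurable_digammaKernel : Measurable digammaKernel := by
  unfold digammaKernel
  fun_prop

lemma one_sub_exp_neg_pos {t : ℝ} (ht : 0 < t) : 0 < 1 - Real.exp (-t) := by
  simpa

lemma digammaKernel_mul_one_sub_exp_neg {t : ℝ} (ht : 0 < t) :
    digammaKernel t * (1 - Complex.exp (-t)) = (1 - Complex.exp (-t)) / t - 1 := by
  have hne : 1 - Complex.exp (-t) ≠ 0 := by exact_mod_cast (one_sub_exp_neg_pos ht).ne'
  rw [digammaKernel, sub_mul, one_div_mul_cancel hne, one_div_mul_eq_div]

lemma norm_digammaKernel_le_one {t : ℝ} (ht : 0 < t) : ‖digammaKernel t‖ ≤ 1 := by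
  have hpos : 0 < 1 - Real.exp (-t) := one_sub_exp_neg_pos ht
  have hlower : 1 / t ≤ 1 / (1 - Real.exp (-t)) := by
    gcongr
    linarith [Real.one_sub_le_exp_neg t]
  have hupper : 1 / (1 - Real.exp (-t)) ≤ 1 / t + 1 := by
    have hexp : Real.exp (-t) ≤ (1 + t)⁻¹ := by
      rw [Real.exp_neg]
      gcongr
      linarith [Real.add_one_le_exp t]
    calc 1 / (1 - Real.exp (-t))
      _ ≤ 1 / (1 - (1 + t)⁻¹) := by
          gcongr
          exact sub_pos.2 (inv_lt_one_of_one_lt₀ (by linarith))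
      _ = 1 / t + 1 := by
          have hdiff : 1 - (1 + t)⁻¹ = t / (1 + t) := by
            field_simp
            ring
          rw [hdiff]
          field_simp
  have hreal : digammaKernel t = ((1 / t - 1 / (1 - Real.exp (-t)) : ℝ) : ℂ) := by
    simp [digammaKernel]
  rw [hreal, Complex.norm_real, Real.norm_eq_abs, abs_le]
  constructor <;> linarith

lemma laplaceConvergent_digammaKernel_smul_eulerLog {z : ℂ} (hz : 0 < z.re) :
    LaplaceConvergent (fun t => digammaKernel t • eulerLog t) z :=
  (laplaceConvergent_eulerLog hz).bdd_smul measurable_digammaKernel.aestronglyMeasurable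
    fun _ => norm_digammaKernel_le_one

lemma norm_one_sub_exp_neg_div_le_one {t : ℝ} (ht : 0 < t) :
    ‖(1 - Complex.exp (-t)) / t‖ ≤ 1 := by
  have hreal : (1 - Complex.exp (-t)) / t = (((1 - Real.exp (-t)) / t : ℝ) : ℂ) := by
    push_cast
    rfl
  rw [hreal, Complex.norm_real,
    Real.norm_of_nonneg (div_nonneg (one_sub_exp_neg_pos ht).le ht.le), div_le_one ht]
  linarith [Real.one_sub_le_exp_neg t]

lemma laplaceConvergent_averaged_eulerLog {z : ℂ} (hz : 0 < z.re) :
    LaplaceConvergent (fun t => ((1 - Complex.exp (-t)) / t) • eulerLog t) z := by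
  have hmeas : Measurable fun t : ℝ => (1 - Complex.exp (-t)) / (t : ℂ) := by fun_prop
  exact (laplaceConvergent_eulerLog hz).bdd_smul hmeas.aestronglyMeasurable
    fun _ => norm_one_sub_exp_neg_div_le_one

lemma laplaceTransform_averaged_eulerLog {z : ℂ} (hz : 0 < z.re) :
    laplaceTransform (fun t => ((1 - Complex.exp (-t)) / t) • eulerLog t) z =
      (Complex.log z ^ 2 - Complex.log (z + 1) ^ 2) / 2 := by
  have haverage := intervalIntegral_laplaceTransform_add (laplaceConvergent_eulerLog hz)
    zero_le_one
  calc laplaceTransform (fun t => ((1 - Complex.exp (-t)) / t) • eulerLog t) z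
    _ = ∫ x in (0 : ℝ)..1, laplaceTransform eulerLog (z + x) := by
        simpa using haverage.symm
    _ = ∫ x in (0 : ℝ)..1, -(Complex.log (z + x) / (z + x)) := by
        refine intervalIntegral.integral_congr fun x hx => ?_
        rw [Set.uIcc_of_le zero_le_one] at hx
        simp only [laplaceTransform_eulerLog (add_ofReal_re_pos hz hx.1), neg_div]
    _ = (Complex.log z ^ 2 - Complex.log (z + 1) ^ 2) / 2 := by
        rw [intervalIntegral.integral_neg, integral_log_add_div_add hz zero_le_one,
          Complex.ofReal_one]
        ring

lemma laplaceTransform_digammaKernel_sub {z : ℂ} (hz : 0 < z.re) :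
    laplaceTransform (fun t => digammaKernel t • eulerLog t) z -
        laplaceTransform (fun t => digammaKernel t • eulerLog t) (z + 1) =
      (Complex.log z ^ 2 - Complex.log (z + 1) ^ 2) / 2 + Complex.log z / z := by
  rw [laplaceTransform_sub_laplaceTransform_add
    (laplaceConvergent_digammaKernel_smul_eulerLog hz) (by simp)]
  calc laplaceTransform
        (fun t => (1 - Complex.exp (-1 * t)) • digammaKernel t • eulerLog t) z
    _ = laplaceTransform
          (fun t => ((1 - Complex.exp (-t)) / t) • eulerLog t - eulerLog t) z := by
        refine laplaceTransform_congr fun t ht => ?_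
        rw [neg_one_mul, smul_smul, mul_comm (1 - _), digammaKernel_mul_one_sub_exp_neg ht,
          sub_smul, one_smul]
    _ = (Complex.log z ^ 2 - Complex.log (z + 1) ^ 2) / 2 + Complex.log z / z := by
        rw [laplaceTransform_sub (laplaceConvergent_averaged_eulerLog hz)
          (laplaceConvergent_eulerLog hz), laplaceTransform_averaged_eulerLog hz,
          laplaceTransform_eulerLog hz]
        ring

/-- The integral representation of `ψ₁` on the right half-plane. -/
noncomputable def psi1Integral (z : ℂ) : ℂ :=
  Complex.log z ^ 2 / 2 - laplaceTransform (fun t => digammaKernel t • eulerLog t) z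

lemma psi1Integral_add_one {z : ℂ} (hz : 0 < z.re) :
    psi1Integral (z + 1) = psi1Integral z + Complex.log z / z := by
  rw [psi1Integral, psi1Integral]
  linear_combination laplaceTransform_digammaKernel_sub hz

lemma psi1Integral_add_natCast {z : ℂ} (hz : 0 < z.re) (n : ℕ) :
    psi1Integral (z + n) =
      psi1Integral z + ∑ m ∈ Finset.range n, Complex.log (z + m) / (z + m) := by
  induction n with
  | zero => simp
  | succ n ih =>
    have hre : 0 < (z + n).re := by exact_mod_cast add_ofReal_re_pos hz n.cast_nonneg
    rw [Finset.sum_range_succ, ← add_assoc, ← ih, ← psi1Integral_add_one hre]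
    push_cast
    ring_nf

end Psi1Integral

section LogAsymptotics

lemma norm_clog_le_mul_rpow {ε : ℝ} (hε : 0 < ε) {w : ℂ} (hw : 1 ≤ ‖w‖) :
    ‖Complex.log w‖ ≤ (1 / ε + Real.pi) * ‖w‖ ^ ε := by
  calc ‖Complex.log w‖
    _ ≤ |(Complex.log w).re| + |(Complex.log w).im| := Complex.norm_le_abs_re_add_abs_im _
    _ ≤ ‖w‖ ^ ε / ε + Real.pi := by
        rw [Complex.log_re, Complex.log_im, abs_of_nonneg (Real.log_nonneg hw)]
        gcongr
        · exact Real.log_le_rpow_div (norm_nonneg w) hε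
        · exact Complex.abs_arg_le_pi w
    _ ≤ ‖w‖ ^ ε / ε + Real.pi * ‖w‖ ^ ε := by
        gcongr
        exact le_mul_of_one_le_right Real.pi_pos.le (Real.one_le_rpow hw hε.le)
    _ = (1 / ε + Real.pi) * ‖w‖ ^ ε := by ring

lemma norm_clog_div_pow_le {ε : ℝ} (hε : 0 < ε) {k : ℕ} (hk : ε ≤ k) {N : ℝ} (hN : 1 ≤ N)
    {w : ℂ} (hw : N ≤ ‖w‖) :
    ‖Complex.log w / w ^ k‖ ≤ (1 / ε + Real.pi) * N ^ (ε - k) := by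
  have hpos : 0 < ‖w‖ := by linarith
  calc ‖Complex.log w / w ^ k‖
    _ ≤ (1 / ε + Real.pi) * ‖w‖ ^ ε / ‖w‖ ^ k := by
        rw [norm_div, norm_pow]
        gcongr
        exact norm_clog_le_mul_rpow hε (hN.trans hw)
    _ = (1 / ε + Real.pi) * ‖w‖ ^ (ε - k) := by
        rw [Real.rpow_sub hpos, Real.rpow_natCast, mul_div_assoc]
    _ ≤ (1 / ε + Real.pi) * N ^ (ε - k) := by
        gcongr ?_ * ?_
        exact Real.rpow_le_rpow_of_nonpos (by linarith) hw (by linarith)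

lemma norm_image_add_sub_le_of_norm_hasDerivAt_le {f f' : ℂ → ℂ} {N C : ℝ}
    (hf : ∀ w : ℂ, N ≤ w.re → HasDerivAt f (f' w) w) (hC : ∀ w : ℂ, N ≤ w.re → ‖f' w‖ ≤ C)
    {z : ℂ} (hz : 0 ≤ z.re) : ‖f (N + z) - f N‖ ≤ C * ‖z‖ := by
  have hN : (N : ℂ) ∈ {w : ℂ | N ≤ w.re} := by simp
  have hNz : N + z ∈ {w : ℂ | N ≤ w.re} := by simpa
  simpa only [add_sub_cancel_left] using
    (convex_halfSpace_re_ge N).norm_image_sub_le_of_norm_hasDerivWithin_le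
      (fun w hw => (hf w hw).hasDerivWithinAt) hC hN hNz

variable {N : ℝ} {z : ℂ}

lemma norm_clog_sq_add_sub_le (hN : 1 ≤ N) (hz : 0 ≤ z.re) :
    ‖Complex.log (N + z) ^ 2 - Complex.log N ^ 2‖ ≤
      2 * ((2 + Real.pi) * N ^ (-(1 / 2) : ℝ)) * ‖z‖ := by
  refine norm_image_add_sub_le_of_norm_hasDerivAt_le
    (f := fun w => Complex.log w ^ 2) (f' := fun w => 2 * (Complex.log w / w ^ 1))
    (fun w hw => ?_) (fun w hw => ?_) hz
  · refine ((Complex.hasDerivAt_log (.inl (by linarith))).pow 2).congr_deriv ?_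
    push_cast
    ring
  · rw [norm_mul, Complex.norm_ofNat]
    gcongr
    refine (norm_clog_div_pow_le (ε := 1 / 2) (k := 1) (by norm_num) (by norm_num) hN
      (hw.trans (Complex.re_le_norm w))).trans_eq ?_
    norm_num

lemma norm_clog_div_add_sub_le (hN : 1 ≤ N) (hz : 0 ≤ z.re) :
    ‖Complex.log (N + z) / (N + z) - Complex.log N / N‖ ≤
      ((3 + Real.pi) * N ^ (-(3 / 2) : ℝ)) * ‖z‖ := by
  refine norm_image_add_sub_le_of_norm_hasDerivAt_le
    (f := fun w => Complex.log w / w) (f' := fun w => 1 / w ^ 2 - Complex.log w / w ^ 2)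
    (fun w hw => ?_) (fun w hw => ?_) hz
  · have hre : 0 < w.re := by linarith
    have hw0 : w ≠ 0 := Complex.ne_zero_of_re_pos hre
    refine ((Complex.hasDerivAt_log (.inl hre)).div (hasDerivAt_id w) hw0).congr_deriv ?_
    simp [hw0, sub_div]
  · have hnorm : N ≤ ‖w‖ := hw.trans (Complex.re_le_norm w)
    have hinv : ‖1 / w ^ 2‖ ≤ N ^ (-(3 / 2) : ℝ) := by
      calc ‖1 / w ^ 2‖
        _ ≤ 1 / N ^ 2 := by
            rw [norm_div, norm_one, norm_pow]
            gcongr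
        _ = N ^ (-2 : ℝ) := by
            rw [Real.rpow_neg (by linarith), Real.rpow_two, one_div]
        _ ≤ N ^ (-(3 / 2) : ℝ) := Real.rpow_le_rpow_of_exponent_le hN (by norm_num)
    have hlog : ‖Complex.log w / w ^ 2‖ ≤ (2 + Real.pi) * N ^ (-(3 / 2) : ℝ) := by
      refine (norm_clog_div_pow_le (ε := 1 / 2) (k := 2) (by norm_num) (by norm_num) hN
        hnorm).trans_eq ?_
      norm_num
    linarith [norm_sub_le (1 / w ^ 2) (Complex.log w / w ^ 2)]

lemma tendsto_clog_sq_natCast_add_sub (hz : 0 ≤ z.re) :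
    Tendsto (fun n : ℕ => Complex.log (n + z) ^ 2 - Complex.log n ^ 2) atTop (𝓝 0) := by
  refine squeeze_zero_norm' (a := fun n : ℕ =>
    2 * ((2 + Real.pi) * (n : ℝ) ^ (-(1 / 2) : ℝ)) * ‖z‖) ?_ ?_
  · filter_upwards [eventually_ge_atTop 1] with n hn
    simpa only [Complex.ofReal_natCast] using
      norm_clog_sq_add_sub_le (N := n) (by exact_mod_cast hn) hz
  · have hdecay : Tendsto (fun n : ℕ => (n : ℝ) ^ (-(1 / 2) : ℝ)) atTop (𝓝 0) :=
      (tendsto_rpow_neg_atTop (by norm_num)).comp tendsto_natCast_atTop_atTop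
    simpa using ((hdecay.const_mul (2 + Real.pi)).const_mul 2).mul_const ‖z‖

lemma summable_clog_div_add_sub (hz : 0 ≤ z.re) :
    Summable fun n : ℕ => Complex.log ((n : ℂ) + 1 + z) / ((n : ℂ) + 1 + z) -
      Complex.log ((n : ℂ) + 1) / ((n : ℂ) + 1) := by
  have hrpow : Summable fun n : ℕ => ((n + 1 : ℕ) : ℝ) ^ (-(3 / 2) : ℝ) :=
    (summable_nat_add_iff 1).2 (Real.summable_nat_rpow.2 (by norm_num))
  refine .of_norm_bounded ((hrpow.mul_left (3 + Real.pi)).mul_right ‖z‖) fun n => ?_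
  simpa using norm_clog_div_add_sub_le (N := (n + 1 : ℕ)) (by simp) hz

end LogAsymptotics

section Psi1

variable {z : ℂ}

lemma tendsto_sum_clog_div_sub (hz : 0 < z.re) :
    Tendsto (fun n : ℕ =>
        ∑ m ∈ Finset.range n, Complex.log (z + m) / (z + m) - Complex.log n ^ 2 / 2)
      atTop (𝓝 (-psi1Integral z)) := by
  have hdecay : Tendsto (fun n : ℕ =>
      laplaceTransform (fun t => digammaKernel t • eulerLog t) (z + n)) atTop (𝓝 0) := by
    exact_mod_cast (tendsto_laplaceTransform_add_ofReal_atTop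
      (laplaceConvergent_digammaKernel_smul_eulerLog hz)).comp tendsto_natCast_atTop_atTop
  have hlim := (((tendsto_clog_sq_natCast_add_sub hz.le).div_const 2).sub hdecay).sub_const
    (psi1Integral z)
  rw [zero_div, sub_zero, zero_sub] at hlim
  refine hlim.congr fun n => ?_
  have htelescope := psi1Integral_add_natCast hz n
  rw [psi1Integral] at htelescope
  rw [add_comm (n : ℂ)]
  linear_combination htelescope

lemma ofReal_sum_Icc_log_div (n : ℕ) :
    ((∑ j ∈ Finset.Icc 1 n, Real.log j / j : ℝ) : ℂ) =
      ∑ m ∈ Finset.range n, Complex.log (1 + m) / (1 + m) := by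
  rw [← Finset.Ico_add_one_right_eq_Icc, Finset.sum_Ico_eq_sum_range, Nat.add_sub_cancel,
    Complex.ofReal_sum]
  refine Finset.sum_congr rfl fun m _ => ?_
  rw [Complex.ofReal_div, Complex.ofReal_natCast, Complex.natCast_log, Nat.cast_add, Nat.cast_one]

lemma gamma1_eq_neg_psi1Integral_one : (gamma1 : ℂ) = -psi1Integral 1 := by
  have hcomplex : Tendsto (fun n : ℕ => ((∑ j ∈ Finset.Icc 1 n, Real.log j / j -
      Real.log n ^ 2 / 2 : ℝ) : ℂ)) atTop (𝓝 (-psi1Integral 1)) := by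
    refine (tendsto_sum_clog_div_sub (by simp)).congr fun n => ?_
    rw [Complex.ofReal_sub, ofReal_sum_Icc_log_div]
    push_cast [Complex.natCast_log]
    rfl
  have hreal := (Complex.continuous_re.tendsto _).comp hcomplex
  have hgamma1 : gamma1 = (-psi1Integral 1).re := hreal.limUnder_eq
  rw [hgamma1]
  exact tendsto_nhds_unique (tendsto_ofReal_iff.2 hreal) hcomplex

lemma hasSum_clog_div_add_sub (hz : 0 < z.re) :
    HasSum (fun n : ℕ => Complex.log ((n : ℂ) + 1 + z) / ((n : ℂ) + 1 + z) -
      Complex.log ((n : ℂ) + 1) / ((n : ℂ) + 1)) (psi1Integral 1 - psi1Integral (z + 1)) := by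
  rw [(summable_clog_div_add_sub hz.le).hasSum_iff_tendsto_nat]
  have hlim := (tendsto_sum_clog_div_sub (z := z + 1) (by simpa using add_pos hz one_pos)).sub
    (tendsto_sum_clog_div_sub (z := 1) (by simp))
  rw [neg_sub_neg] at hlim
  refine hlim.congr fun n => ?_
  rw [sub_sub_sub_cancel_right, ← Finset.sum_sub_distrib]
  refine Finset.sum_congr rfl fun m _ => ?_
  ring_nf

lemma psi1_eq_psi1Integral (hz : 0 < z.re) : psi1 z = psi1Integral z := by
  rw [psi1, (hasSum_clog_div_add_sub hz).tsum_eq, gamma1_eq_neg_psi1Integral_one,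
    psi1Integral_add_one hz]
  ring

end Psi1

theorem stmt11 (z : ℂ) (hz : 0 < z.re) :
    psi1 z = (1/2) * (Complex.log z) ^ 2
      - ∫ t in Set.Ioi (0:ℝ), Complex.exp (-z * (t : ℂ))
          * (1 / (t : ℂ) - 1 / (1 - Complex.exp (-(t : ℂ))))
          * ((eulerGamma : ℂ) + (Real.log t : ℂ)) := by
  rw [psi1_eq_psi1Integral hz, psi1Integral, laplaceTransform]
  simp only [digammaKernel, eulerLog, smul_eq_mul, mul_assoc, one_div_mul_eq_div]
end
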